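/- Consider the diversity-preserving UCB algorithm run on a bandit problem ν whose arm distributions all belong to D_{[0,1]}, where P is a finite polytope and at least one p ∈ Ext(P) satisfies Δ(p) > 0. If ℓ = min_{p∈P} min_{a∈[K]} p_a > 0, then for all T ≥ 1 the regret satisfies the closed-form bound R_T(ν) ≤ (24K/Δ)·ln(1 + (32/(Δ²ℓ))·ln(16/(Δ²ℓ))) + (7K+3)/min{Δ, ℓ²}. -/

import Mathlib

/-!
The mixed action of round `n + 1` depends on the first `n` rounds. Write `N_a(n)` for the pull counts
and `S_a(n)` for the centred reward sums (`dev`). Outside the deviation events (`devEvent`), whose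
probabilities are at most `2 / n²` by Hoeffding's lemma and a union bound over the values of `N_a(n)`,
every index dominates its mean; so the gap of the selected vertex `v` is at most
`∑_a v_a (U_a - μ_a)` (`gap_le_sum`). A nonzero gap is at least `Δ`. Rounds are split at
`n0 = 2 x log x` with `x = 16 / (Δ² ℓ)`.

For `n ≤ n0` the gap is at most `∑_a v_a (2 (U_a - μ_a) - Δ)` (`gap_le_explore`). By
`2 d ≤ Δ / 2 + (2 / Δ) d²` applied to the estimation error `d = S_a / N_a`, the bracket is at most
`width + (2 / Δ) (S_a / N_a)²`. In expectation the weights `v_a` may be replaced by indicators of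
pulls. The widths then sum to `O(L / Δ)` along the pull counts (`sum_width_le`), where
`L = log (1 + n0)`, and the squared errors sum to at most `2 (1 + log n)` by the potential argument
with `S_a² / N_a` (`integral_sum_dev_sq_le`). Each arm thus costs at most `24 L / Δ`.

For `n > n0`, all arms satisfy `N_a(n) ≥ ℓ n / 2` up to an event of probability at most
`K exp (-ℓ n / 8)` (`measureReal_pulls_lt`), because every arm has conditional probability at least
`ℓ`. On the complement the indices are within less than `Δ` of the means, so the gap vanishes
(`gap_le_exploit`). These exceptional events cost at most `3 K / ℓ²`, the deviation events at most
`4 K`, and the first round at most `1`.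
-/

open MeasureTheory Finset

noncomputable section

namespace DivBanditUCB

/-- The inner product `⟨p, q⟩ = ∑ a p_a q_a` on `ℝ^K`. -/
def dot {K : ℕ} (p q : Fin K → ℝ) : ℝ := ∑ a, p a * q a

/-- `N_a(t)`: the number of times arm `a` was pulled during rounds `1, …, t`. -/
def pulls {Ω : Type*} {K : ℕ} (A : ℕ → Ω → Fin K) (a : Fin K) (t : ℕ) (ω : Ω) : ℕ :=
  ∑ s ∈ Finset.Icc 1 t, if A s ω = a then 1 else 0

/-- `μ̂_a(t)`: the empirical mean of the rewards obtained when arm `a` was played,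
with the convention `μ̂_a(t) = 1` when `N_a(t) = 0`. -/
def empMean {Ω : Type*} {K : ℕ} (A : ℕ → Ω → Fin K) (Y : ℕ → Ω → ℝ) (a : Fin K) (t : ℕ)
    (ω : Ω) : ℝ :=
  if pulls A a t ω = 0 then 1
  else (∑ s ∈ Finset.Icc 1 t, if A s ω = a then Y s ω else 0) / (pulls A a t ω : ℝ)

/-- The upper confidence bound `U_a(t) = μ̂_a(t) + sqrt(2 log t / max{N_a(t), 1})`,
with `U_a(0) = 1`. -/
def ucbIndex {Ω : Type*} {K : ℕ} (A : ℕ → Ω → Fin K) (Y : ℕ → Ω → ℝ) (a : Fin K) (t : ℕ)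
    (ω : Ω) : ℝ :=
  if t = 0 then 1
  else empMean A Y a t ω + Real.sqrt (2 * Real.log t / (max (pulls A a t ω) 1 : ℕ))

/-- The σ-algebra generated by the history `A_1, Y_1, …, A_t, Y_t`. -/
def hist {Ω : Type*} {K : ℕ} (A : ℕ → Ω → Fin K) (Y : ℕ → Ω → ℝ) (t : ℕ) :
    MeasurableSpace Ω :=
  ⨆ s ∈ Set.Icc 1 t,
    (MeasurableSpace.comap (A s) inferInstance ⊔ MeasurableSpace.comap (Y s) inferInstance)

/-! ### Elementary sums and inequalities -/

/-- Telescoping majorant of the truncated terms `u / √(k+1) - 1`, by differences of the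
squares of `max (u - √k) 0`. -/
theorem sqrt_step (u : ℝ) (hu : 0 ≤ u) (k : ℕ) :
    max (u / √((k : ℝ) + 1) - 1) 0
      ≤ (max (u - √(k : ℝ)) 0) ^ 2 - (max (u - √((k : ℝ) + 1)) 0) ^ 2 := by
  have hk : (0 : ℝ) ≤ k := Nat.cast_nonneg k
  set x := √(k : ℝ) with hx
  set y := √((k : ℝ) + 1) with hy
  have hx0 : 0 ≤ x := Real.sqrt_nonneg _
  have hy0 : 0 < y := Real.sqrt_pos.2 (by linarith)
  have hxx : x ^ 2 = k := Real.sq_sqrt hk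
  have hyy : y ^ 2 = k + 1 := Real.sq_sqrt (by linarith)
  have hxy : x ≤ y := Real.sqrt_le_sqrt (by linarith)
  rcases le_total u y with h | h
  · rw [max_eq_right (a := u / y - 1) (by rw [sub_nonpos, div_le_one hy0]; exact h),
      max_eq_right (a := u - y) (by linarith)]
    nlinarith [sq_nonneg (max (u - x) 0)]
  · rw [max_eq_left (a := u / y - 1) (by rw [sub_nonneg, one_le_div hy0]; exact h),
      max_eq_left (a := u - y) (by linarith), max_eq_left (a := u - x) (by linarith)]
    have h1 : u / y ≤ 2 * u * (y - x) := by
      rw [div_le_iff₀ hy0]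
      have : 1 ≤ 2 * (y - x) * y := by nlinarith [sq_nonneg (y - x)]
      nlinarith
    nlinarith

/-- Confidence widths `c / √(k+1)` truncated at the level `δ` have total excess at most
`c² / δ`, uniformly in the number of terms. -/
theorem sum_threshold_le (c δ : ℝ) (hc : 0 ≤ c) (hδ : 0 < δ) (n : ℕ) :
    ∑ k ∈ range n, max (c / √((k : ℝ) + 1) - δ) 0 ≤ c ^ 2 / δ := by
  have hstep : ∀ k : ℕ, max (c / √((k : ℝ) + 1) - δ) 0
      ≤ δ * ((max (c / δ - √(k : ℝ)) 0) ^ 2 - (max (c / δ - √((k + 1 : ℕ) : ℝ)) 0) ^ 2) := by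
    intro k
    have h := mul_le_mul_of_nonneg_left (sqrt_step (c / δ) (by positivity) k) hδ.le
    rw [mul_max_of_nonneg _ _ hδ.le] at h
    push_cast
    refine le_trans (le_of_eq ?_) h
    congr 1
    · field_simp
    · simp
  refine (sum_le_sum fun k _ => hstep k).trans ?_
  rw [← mul_sum, Finset.sum_range_sub']
  have h0 : max (c / δ - √((0 : ℕ) : ℝ)) 0 = c / δ := by
    simp; positivity
  rw [h0]
  have : c ^ 2 / δ = δ * (c / δ) ^ 2 := by field_simp
  rw [this]
  gcongr
  nlinarith [sq_nonneg (max (c / δ - √((n : ℕ) : ℝ)) 0)]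

theorem sum_inv_sq_le (n : ℕ) : ∑ k ∈ range n, 1 / ((k : ℝ) + 1) ^ 2 ≤ 2 := by
  have h : ∀ n : ℕ, ∑ k ∈ range (n + 1), 1 / ((k : ℝ) + 1) ^ 2 ≤ 2 - 1 / ((n : ℝ) + 1) := by
    intro n
    induction n with
    | zero => norm_num
    | succ n ih =>
      rw [sum_range_succ]
      push_cast
      have hn : (0 : ℝ) ≤ n := Nat.cast_nonneg n
      have : 1 / ((n : ℝ) + 1 + 1) ^ 2 ≤ 1 / ((n : ℝ) + 1) - 1 / ((n : ℝ) + 1 + 1) := by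
        rw [div_sub_div _ _ (by positivity) (by positivity),
          div_le_div_iff₀ (by positivity) (by positivity)]
        nlinarith
      linarith
  cases n with
  | zero => norm_num
  | succ n =>
    have h0 : 0 ≤ 1 / ((n : ℝ) + 1) := by positivity
    linarith [h n]

theorem sum_harmonic_le (n m : ℕ) (h : n ≤ m) :
    ∑ k ∈ range n, 1 / ((k : ℝ) + 1) ≤ 1 + Real.log m := by
  calc ∑ k ∈ range n, 1 / ((k : ℝ) + 1) ≤ ∑ k ∈ range m, 1 / ((k : ℝ) + 1) :=
        sum_le_sum_of_subset_of_nonneg (range_mono h) fun _ _ _ => by positivity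
    _ = ((harmonic m : ℚ) : ℝ) := by simp [harmonic]
    _ ≤ 1 + Real.log m := harmonic_le_one_add_log m

theorem sum_exp_le (c : ℝ) (hc : 0 < c) (n : ℕ) :
    ∑ k ∈ range n, Real.exp (-(c * k)) ≤ 1 + 1 / c := by
  have hr : Real.exp (-c) < 1 := by simpa using hc
  have h1 : ∀ k : ℕ, Real.exp (-(c * k)) = Real.exp (-c) ^ k := by
    intro k; rw [← Real.exp_nat_mul]; ring_nf
  simp_rw [h1]
  have h2 : ∑ k ∈ range n, Real.exp (-c) ^ k ≤ (1 - Real.exp (-c))⁻¹ := by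
    rw [← tsum_geometric_of_lt_one (Real.exp_pos _).le hr]
    exact (summable_geometric_of_lt_one (Real.exp_pos _).le hr).sum_le_tsum _
      fun _ _ => by positivity
  refine h2.trans ?_
  have h3 : Real.exp (-c) ≤ 1 / (1 + c) := by
    rw [Real.exp_neg, ← one_div]
    exact one_div_le_one_div_of_le (by linarith) (by linarith [Real.add_one_le_exp c])
  have h4 : c / (1 + c) ≤ 1 - Real.exp (-c) := by
    have : c / (1 + c) = 1 - 1 / (1 + c) := by field_simp; ring
    linarith
  calc (1 - Real.exp (-c))⁻¹ ≤ (c / (1 + c))⁻¹ := inv_anti₀ (by positivity) h4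
    _ = 1 + 1 / c := by field_simp; ring

/-- Beyond `2 x log x` the linear function dominates `x log`; this is where the factor
`ln(16 / (Δ² ℓ))` of the regret bound comes from. -/
theorem log_lt_of_threshold (x n : ℝ) (hx : 0 < x) (hn : 0 < n) (h : 2 * x * Real.log x < n) :
    x * Real.log n < n := by
  have h1 : Real.log (n / (2 * x)) ≤ n / (2 * x) - 1 := Real.log_le_sub_one_of_pos (by positivity)
  rw [Real.log_div hn.ne' (by positivity), Real.log_mul two_ne_zero hx.ne'] at h1
  have h2 := Real.log_two_lt_d9
  have h3 : x * (n / (2 * x)) = n / 2 := by field_simp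
  nlinarith [mul_le_mul_of_nonneg_left h1 hx.le]

theorem log_sixteen : (2.5 : ℝ) ≤ Real.log 16 := by
  have : Real.log 16 = 4 * Real.log 2 := by
    rw [show (16 : ℝ) = 2 ^ 4 by norm_num, Real.log_pow]; norm_num
  rw [this]; linarith [Real.log_two_gt_d9]

theorem eight_thirds_le_log : (8 / 3 : ℝ) ≤ Real.log 81 := by
  have : Real.log 81 ≥ Real.log 16 + Real.log 2 := by
    rw [← Real.log_mul (by norm_num) (by norm_num)]
    exact Real.log_le_log (by norm_num) (by norm_num)
  linarith [log_sixteen, Real.log_two_gt_d9]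

/-! ### Conditional laws of arms and rewards -/

section CondExp
variable {Ω : Type*} {m mΩ : MeasurableSpace Ω} {P : Measure Ω} [IsProbabilityMeasure P] {K : ℕ}

theorem integral_mul_eq_of_condExp (hm : m ≤ mΩ) {f g h : Ω → ℝ}
    (hfg : P[f | m] =ᵐ[P] g) (hf : Integrable f P) (hh : StronglyMeasurable[m] h)
    (hhf : Integrable (fun ω => h ω * f ω) P) :
    ∫ ω, h ω * f ω ∂P = ∫ ω, h ω * g ω ∂P := by
  have h1 := condExp_mul_of_stronglyMeasurable_left (μ := P) hh hhf hf
  rw [← integral_condExp hm]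
  refine integral_congr_ae ?_
  filter_upwards [h1, hfg] with ω h2 h3
  have h4 : P[fun ω => h ω * f ω | m] ω = h ω * P[f | m] ω := h2
  rw [h4, h3]

variable {ν : Fin K → Measure ℝ} {A : Ω → Fin K} {Y : Ω → ℝ}

/-- A reward whose conditional law is carried by `[0,1]` lies in `[0,1]` almost surely. -/
theorem ae_mem_Icc (hm : m ≤ mΩ) (hY : Measurable Y) (hν : ∀ a, (ν a) (Set.Icc (0 : ℝ) 1)ᶜ = 0)
    (h : ∀ s : Set ℝ, MeasurableSet s →
      (P[({ω | Y ω ∈ s}).indicator (fun _ => (1 : ℝ)) | m]) =ᵐ[P] fun ω => ((ν (A ω)) s).toReal) :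
    ∀ᵐ ω ∂P, Y ω ∈ Set.Icc (0 : ℝ) 1 := by
  have hs : MeasurableSet ((Set.Icc (0 : ℝ) 1)ᶜ) := measurableSet_Icc.compl
  have h1 := h _ hs
  have h2 : ∫ ω, ({ω | Y ω ∈ (Set.Icc (0 : ℝ) 1)ᶜ}).indicator (fun _ => (1 : ℝ)) ω ∂P = 0 := by
    rw [← integral_condExp hm, integral_congr_ae h1]
    simp [hν]
  have hYs : MeasurableSet {ω | Y ω ∈ (Set.Icc (0 : ℝ) 1)ᶜ} := hY hs
  rw [integral_indicator hYs] at h2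
  simp only [integral_const, smul_eq_mul, mul_one, measureReal_restrict_apply_univ] at h2
  rw [measureReal_eq_zero_iff] at h2
  rw [ae_iff]
  exact h2

/-- On an event `B` of the conditioning σ-algebra on which the drawn arm is `a`, the reward has
law `ν a`. This turns the setwise description of the conditional law into an identity of
measures, which then applies to arbitrary test functions. -/
theorem map_restrict_eq (hm : m ≤ mΩ) (hY : Measurable Y) (hνp : ∀ a, IsProbabilityMeasure (ν a))
    (h : ∀ s : Set ℝ, MeasurableSet s →
      (P[({ω | Y ω ∈ s}).indicator (fun _ => (1 : ℝ)) | m]) =ᵐ[P] fun ω => ((ν (A ω)) s).toReal)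
    (a : Fin K) {B : Set Ω} (hB : MeasurableSet[m] B) (hBA : ∀ ω ∈ B, A ω = a) :
    (P.restrict B).map Y = P B • ν a := by
  ext s hs
  have hB' := hm _ hB
  rw [Measure.map_apply hY hs, Measure.restrict_apply (hY hs), Measure.smul_apply, smul_eq_mul]
  rw [← ENNReal.toReal_eq_toReal_iff' (measure_ne_top _ _)
    (ENNReal.mul_ne_top (measure_ne_top _ _) (measure_ne_top _ _)), ENNReal.toReal_mul]
  have hi : Integrable (({ω | Y ω ∈ s}).indicator (fun _ => (1 : ℝ))) P :=
    (integrable_const 1).indicator (hY hs)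
  have h1 : ∫ ω in B, ({ω | Y ω ∈ s}).indicator (fun _ => (1 : ℝ)) ω ∂P
      = ∫ ω in B, ((ν a) s).toReal ∂P := by
    rw [← setIntegral_condExp hm hi hB]
    refine setIntegral_congr_ae hB' ?_
    filter_upwards [h s hs] with ω hω hωB
    rw [hω, hBA ω hωB]
  have hYs : MeasurableSet {ω | Y ω ∈ s} := hY hs
  rw [integral_indicator hYs, Measure.restrict_restrict hYs] at h1
  simp only [integral_const, smul_eq_mul, mul_one, measureReal_restrict_apply_univ] at h1
  exact h1

/-- A function `g` of the reward that is centred under `ν a`, restricted to the rounds where `a`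
is drawn, is orthogonal to everything measurable with respect to the past and the drawn arm. -/
theorem integral_mul_reward_eq_zero (hm : m ≤ mΩ) (hA : Measurable[m] A) (hY : Measurable Y)
    (hνp : ∀ a, IsProbabilityMeasure (ν a))
    (h : ∀ s : Set ℝ, MeasurableSet s →
      (P[({ω | Y ω ∈ s}).indicator (fun _ => (1 : ℝ)) | m]) =ᵐ[P] fun ω => ((ν (A ω)) s).toReal)
    (a : Fin K) {g : ℝ → ℝ} (hg : Measurable g) (hgY : Integrable (fun ω => g (Y ω)) P)
    (hgν : ∫ y, g y ∂(ν a) = 0)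
    {H : Ω → ℝ} (hH : StronglyMeasurable[m] H)
    (hHi : Integrable (fun ω => H ω * (if A ω = a then g (Y ω) else 0)) P) :
    ∫ ω, H ω * (if A ω = a then g (Y ω) else 0) ∂P = 0 := by
  have hAa : MeasurableSet[m] {ω | A ω = a} := hA (measurableSet_singleton a)
  have hf : (fun ω => if A ω = a then g (Y ω) else 0)
      = ({ω | A ω = a}).indicator (fun ω => g (Y ω)) := by
    ext ω; simp [Set.indicator]
  have hfi : Integrable (fun ω => if A ω = a then g (Y ω) else 0) P := by
    rw [hf]; exact hgY.indicator (hm _ hAa)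
  have hz : P[fun ω => if A ω = a then g (Y ω) else 0 | m] =ᵐ[P] fun _ => (0 : ℝ) := by
    symm
    refine ae_eq_condExp_of_forall_setIntegral_eq hm hfi (fun _ _ _ => integrableOn_zero) ?_
      (StronglyMeasurable.aestronglyMeasurable stronglyMeasurable_const)
    intro B hB _
    rw [hf, setIntegral_indicator (hm _ hAa)]
    have hB2 : MeasurableSet[m] (B ∩ {ω | A ω = a}) := hB.inter hAa
    have hmap := map_restrict_eq hm hY hνp h a hB2 (fun ω hω => hω.2)
    rw [← integral_map (μ := P.restrict (B ∩ {ω | A ω = a})) hY.aemeasurable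
      hg.aestronglyMeasurable, hmap, integral_smul_measure, hgν]
    simp
  rw [integral_mul_eq_of_condExp hm hz hfi hH hHi]
  simp

end CondExp

/-! ### Histories and runs -/

section History
variable {Ω : Type*} {K : ℕ}

/-- The centred reward sum `∑_{s ≤ t, A_s = a} (Y_s - μ_a) = N_a(t) (μ̂_a(t) - μ_a)` of arm `a`. -/
def dev (A : ℕ → Ω → Fin K) (Y : ℕ → Ω → ℝ) (μ : Fin K → ℝ) (a : Fin K) (t : ℕ) (ω : Ω) : ℝ :=
  ∑ s ∈ Finset.Icc 1 t, if A s ω = a then Y s ω - μ a else 0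

/-- The event that after `n` rounds arm `a` has been pulled and its empirical mean is at
distance at least the confidence width `√(2 log n / N_a(n))` from `μ a`, written in terms of the
unnormalised deviation. -/
def devEvent (A : ℕ → Ω → Fin K) (Y : ℕ → Ω → ℝ) (μ : Fin K → ℝ) (a : Fin K) (n : ℕ) : Set Ω :=
  {ω | 1 ≤ pulls A a n ω ∧
    (pulls A a n ω : ℝ) * √(2 * Real.log n / pulls A a n ω) ≤ |dev A Y μ a n ω|}

variable {A : ℕ → Ω → Fin K} {Y : ℕ → Ω → ℝ} {μ : Fin K → ℝ}

theorem dev_succ (a : Fin K) (n : ℕ) (ω : Ω) :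
    dev A Y μ a (n + 1) ω
      = dev A Y μ a n ω + if A (n + 1) ω = a then Y (n + 1) ω - μ a else 0 := by
  unfold dev; rw [Finset.sum_Icc_succ_top (by omega)]

theorem pulls_succ (a : Fin K) (n : ℕ) (ω : Ω) :
    pulls A a (n + 1) ω = pulls A a n ω + if A (n + 1) ω = a then 1 else 0 := by
  unfold pulls; rw [Finset.sum_Icc_succ_top (by omega)]

theorem dev_zero (a : Fin K) (ω : Ω) : dev A Y μ a 0 ω = 0 := by simp [dev]

theorem pulls_zero (a : Fin K) (ω : Ω) : pulls A a 0 ω = 0 := by simp [pulls]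

theorem pulls_le (a : Fin K) (n : ℕ) (ω : Ω) : pulls A a n ω ≤ n := by
  induction n with
  | zero => simp [pulls]
  | succ n ih => rw [pulls_succ]; split_ifs <;> omega

/-- Summing a function of the pull count over the rounds in which `a` is pulled enumerates
`0, 1, …, N_a(n) - 1`. -/
theorem sum_pull_comp (f : ℕ → ℝ) (a : Fin K) (n : ℕ) (ω : Ω) :
    ∑ k ∈ range n, f (pulls A a k ω) * (if A (k + 1) ω = a then 1 else 0)
      = ∑ k ∈ range (pulls A a n ω), f k := by
  induction n with
  | zero => simp [pulls_zero]
  | succ n ih =>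
    rw [sum_range_succ, ih, pulls_succ]
    split_ifs
    · rw [sum_range_succ, mul_one]
    · simp

theorem dev_eq_zero_of_pulls (a : Fin K) (n : ℕ) (ω : Ω) (h : pulls A a n ω = 0) :
    dev A Y μ a n ω = 0 := by
  induction n with
  | zero => exact dev_zero a ω
  | succ n ih =>
    rw [pulls_succ] at h
    rw [dev_succ]
    split_ifs at h ⊢ with hA
    rw [ih (by omega), add_zero]

theorem empMean_sub (a : Fin K) (n : ℕ) (ω : Ω) (h : pulls A a n ω ≠ 0) :
    empMean A Y a n ω - μ a = dev A Y μ a n ω / pulls A a n ω := by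
  have hd : dev A Y μ a n ω
      = (∑ s ∈ Finset.Icc 1 n, if A s ω = a then Y s ω else 0) - μ a * pulls A a n ω := by
    unfold dev pulls
    push_cast
    rw [mul_sum, ← sum_sub_distrib]
    refine sum_congr rfl fun s _ => ?_
    split_ifs <;> simp
  have : (pulls A a n ω : ℝ) ≠ 0 := by exact_mod_cast h
  rw [empMean, if_neg h, hd]
  field_simp

theorem hist_mono {s t : ℕ} (h : s ≤ t) : hist A Y s ≤ hist A Y t :=
  iSup₂_le fun k hk => le_iSup₂_of_le (f := fun k (_ : k ∈ Set.Icc 1 t) =>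
    (MeasurableSpace.comap (A k) inferInstance ⊔ MeasurableSpace.comap (Y k) inferInstance))
    k ⟨hk.1, hk.2.trans h⟩ le_rfl

theorem hist_le {mΩ : MeasurableSpace Ω} (hA : ∀ t, Measurable (A t)) (hY : ∀ t, Measurable (Y t))
    (t : ℕ) : hist A Y t ≤ mΩ :=
  iSup₂_le fun k _ => sup_le (hA k).comap_le (hY k).comap_le

theorem measurable_A_hist {s t : ℕ} (h1 : 1 ≤ s) (h : s ≤ t) : Measurable[hist A Y t] (A s) := by
  rw [measurable_iff_comap_le]
  exact le_trans le_sup_left (le_iSup₂_of_le (f := fun k (_ : k ∈ Set.Icc 1 t) =>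
    (MeasurableSpace.comap (A k) inferInstance ⊔ MeasurableSpace.comap (Y k) inferInstance))
    s ⟨h1, h⟩ le_rfl)

theorem measurable_Y_hist {s t : ℕ} (h1 : 1 ≤ s) (h : s ≤ t) : Measurable[hist A Y t] (Y s) := by
  rw [measurable_iff_comap_le]
  exact le_trans le_sup_right (le_iSup₂_of_le (f := fun k (_ : k ∈ Set.Icc 1 t) =>
    (MeasurableSpace.comap (A k) inferInstance ⊔ MeasurableSpace.comap (Y k) inferInstance))
    s ⟨h1, h⟩ le_rfl)

theorem measurable_pulls (a : Fin K) (n : ℕ) : Measurable[hist A Y n] (pulls A a n) := by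
  unfold pulls
  refine Finset.measurable_fun_sum _ fun s hs => ?_
  rw [Finset.mem_Icc] at hs
  exact Measurable.ite (measurable_A_hist hs.1 hs.2 (measurableSet_singleton a))
    measurable_const measurable_const

theorem measurable_pulls_cast (a : Fin K) (n : ℕ) :
    Measurable[hist A Y n] (fun ω => (pulls A a n ω : ℝ)) :=
  (measurable_from_nat (f := fun k : ℕ => (k : ℝ))).comp (measurable_pulls a n)

theorem measurable_dev (a : Fin K) (n : ℕ) : Measurable[hist A Y n] (dev A Y μ a n) := by
  unfold dev
  refine Finset.measurable_fun_sum _ fun s hs => ?_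
  rw [Finset.mem_Icc] at hs
  exact Measurable.ite (measurable_A_hist hs.1 hs.2 (measurableSet_singleton a))
    ((measurable_Y_hist hs.1 hs.2).sub_const _) measurable_const

end History

/-- The processes `p`, `A`, `Y` form an interaction with the bandit problem `ν` (with means `μ`) in
which every mixed action gives each arm probability at least `ℓ > 0`. How `p t` is selected is left
open: the concentration estimates do not use it. -/
structure IsRun {Ω : Type*} [MeasurableSpace Ω] {K : ℕ} (P : Measure Ω) (ν : Fin K → Measure ℝ)
    (μ : Fin K → ℝ) (ℓ : ℝ) (p : ℕ → Ω → Fin K → ℝ) (A : ℕ → Ω → Fin K) (Y : ℕ → Ω → ℝ) :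
    Prop where
  prob : ∀ a, IsProbabilityMeasure (ν a)
  supp : ∀ a, (ν a) (Set.Icc (0 : ℝ) 1)ᶜ = 0
  mean : ∀ a, μ a = ∫ x, x ∂(ν a)
  measA : ∀ t, Measurable (A t)
  measY : ∀ t, Measurable (Y t)
  measp : ∀ t, 1 ≤ t → Measurable[hist A Y (t - 1)] (p t)
  arm : ∀ t, 1 ≤ t → ∀ a : Fin K,
      (P[({ω | A t ω = a}).indicator (fun _ => (1 : ℝ)) | hist A Y (t - 1)])
        =ᵐ[P] fun ω => p t ω a
  reward : ∀ t, 1 ≤ t → ∀ s : Set ℝ, MeasurableSet s →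
      (P[({ω | Y t ω ∈ s}).indicator (fun _ => (1 : ℝ)) |
          hist A Y (t - 1) ⊔ MeasurableSpace.comap (A t) inferInstance])
        =ᵐ[P] fun ω => ((ν (A t ω)) s).toReal
  pos : 0 < ℓ
  le_p : ∀ t, 1 ≤ t → ∀ ω a, ℓ ≤ p t ω a
  sum_p : ∀ t, 1 ≤ t → ∀ ω, ∑ a, p t ω a = 1

namespace IsRun
variable {Ω : Type*} [MeasurableSpace Ω] {K : ℕ} {P : Measure Ω}
  {ν : Fin K → Measure ℝ} {μ : Fin K → ℝ} {ℓ : ℝ} {p : ℕ → Ω → Fin K → ℝ}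
  {A : ℕ → Ω → Fin K} {Y : ℕ → Ω → ℝ}

theorem p_nonneg (E : IsRun P ν μ ℓ p A Y) {t : ℕ} (ht : 1 ≤ t) (ω : Ω) (a : Fin K) :
    0 ≤ p t ω a := E.pos.le.trans (E.le_p t ht ω a)

theorem p_le_one (E : IsRun P ν μ ℓ p A Y) {t : ℕ} (ht : 1 ≤ t) (ω : Ω) (a : Fin K) :
    p t ω a ≤ 1 := by
  rw [← E.sum_p t ht ω]
  exact single_le_sum (f := p t ω) (fun b _ => E.p_nonneg ht ω b) (mem_univ a)

theorem ae_ν (E : IsRun P ν μ ℓ p A Y) (a : Fin K) : ∀ᵐ x ∂(ν a), x ∈ Set.Icc (0 : ℝ) 1 :=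
  ae_iff.2 (E.supp a)

theorem μ_mem (E : IsRun P ν μ ℓ p A Y) (a : Fin K) : μ a ∈ Set.Icc (0 : ℝ) 1 := by
  have := E.prob a
  rw [E.mean]
  refine ⟨integral_nonneg_of_ae ?_, ?_⟩
  · filter_upwards [E.ae_ν a] with x hx using hx.1
  · calc ∫ x, x ∂(ν a) ≤ ∫ _, (1 : ℝ) ∂(ν a) := by
          refine integral_mono_ae (Integrable.of_mem_Icc 0 1 aemeasurable_id (E.ae_ν a))
            (integrable_const 1) ?_
          filter_upwards [E.ae_ν a] with x hx using hx.2
      _ = 1 := by simp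

theorem hist_le' (E : IsRun P ν μ ℓ p A Y) (n : ℕ) : hist A Y n ≤ ‹MeasurableSpace Ω› :=
  hist_le E.measA E.measY n

variable [IsProbabilityMeasure P]

theorem ae_Y (E : IsRun P ν μ ℓ p A Y) :
    ∀ᵐ ω ∂P, ∀ n : ℕ, Y (n + 1) ω ∈ Set.Icc (0 : ℝ) 1 := by
  rw [ae_all_iff]
  intro n
  exact ae_mem_Icc (sup_le (E.hist_le' _) (E.measA _).comap_le) (E.measY _) E.supp
    (E.reward (n + 1) (by omega))

theorem ae_dev_le (E : IsRun P ν μ ℓ p A Y) :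
    ∀ᵐ ω ∂P, ∀ (a : Fin K) (n : ℕ), |dev A Y μ a n ω| ≤ n := by
  filter_upwards [E.ae_Y] with ω hω a n
  induction n with
  | zero => simp [dev_zero]
  | succ n ih =>
    rw [dev_succ]
    refine (abs_add_le _ _).trans ?_
    push_cast
    refine add_le_add ih ?_
    have h1 := hω n
    have h2 := E.μ_mem a
    split_ifs
    · rw [abs_le]; constructor <;> linarith [h1.1, h1.2, h2.1, h2.2]
    · simp

/-- Martingale increments: a centred function of the next reward of arm `a` integrates to zero
against bounded functions of the past. -/
theorem reward_step (E : IsRun P ν μ ℓ p A Y) (n : ℕ) (a : Fin K) {g : ℝ → ℝ} (hg : Measurable g)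
    {C D : ℝ} (hgC : ∀ y ∈ Set.Icc (0 : ℝ) 1, |g y| ≤ C) (hgν : ∫ y, g y ∂(ν a) = 0)
    {H : Ω → ℝ} (hH : Measurable[hist A Y n] H) (hHD : ∀ᵐ ω ∂P, |H ω| ≤ D) :
    Integrable (fun ω => H ω * (if A (n + 1) ω = a then g (Y (n + 1) ω) else 0)) P ∧
    ∫ ω, H ω * (if A (n + 1) ω = a then g (Y (n + 1) ω) else 0) ∂P = 0 := by
  have hm : hist A Y n ⊔ MeasurableSpace.comap (A (n + 1)) inferInstance
      ≤ ‹MeasurableSpace Ω› := sup_le (E.hist_le' _) (E.measA _).comap_le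
  have hgm : Measurable (fun ω => g (Y (n + 1) ω)) := hg.comp (E.measY _)
  have hi : Integrable (fun ω => H ω * (if A (n + 1) ω = a then g (Y (n + 1) ω) else 0)) P := by
    refine Integrable.of_bound (C := D * C) ?_ ?_
    · refine ((hH.mono (E.hist_le' n) le_rfl).mul (Measurable.ite ?_ hgm
        measurable_const)).aestronglyMeasurable
      exact E.measA _ (measurableSet_singleton a)
    · filter_upwards [hHD, E.ae_Y] with ω h1 h2
      have h3 := hgC _ (h2 n)
      rw [Real.norm_eq_abs, abs_mul]
      refine mul_le_mul h1 ?_ (abs_nonneg _) ((abs_nonneg _).trans h1)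
      split_ifs
      · exact h3
      · simpa using (abs_nonneg _).trans h3
  refine ⟨hi, integral_mul_reward_eq_zero hm ?_ (E.measY _) E.prob
    (E.reward (n + 1) (by omega)) a hg ?_ hgν ?_ hi⟩
  · exact measurable_iff_comap_le.2 le_sup_right
  · refine Integrable.of_bound (C := C) hgm.aestronglyMeasurable ?_
    filter_upwards [E.ae_Y] with ω h2 using hgC _ (h2 n)
  · have hH2 : Measurable[hist A Y n ⊔ MeasurableSpace.comap (A (n + 1)) inferInstance] H :=
      hH.mono le_sup_left le_rfl
    exact hH2.stronglyMeasurable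

/-- Against bounded functions of the past, the indicator `A_{n+1} = a` can be exchanged for the
probability `p_{n+1}(a)`. -/
theorem arm_step (E : IsRun P ν μ ℓ p A Y) (n : ℕ) (a : Fin K)
    {D : ℝ} {H : Ω → ℝ} (hH : Measurable[hist A Y n] H) (hHD : ∀ᵐ ω ∂P, |H ω| ≤ D) :
    Integrable (fun ω => H ω * (if A (n + 1) ω = a then 1 else 0)) P ∧
    Integrable (fun ω => H ω * p (n + 1) ω a) P ∧
    ∫ ω, H ω * (if A (n + 1) ω = a then 1 else 0) ∂P = ∫ ω, H ω * p (n + 1) ω a ∂P := by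
  have hAa : MeasurableSet {ω | A (n + 1) ω = a} := E.measA _ (measurableSet_singleton a)
  have hH' := hH.mono (E.hist_le' n) le_rfl
  have hi : Integrable (fun ω => H ω * (if A (n + 1) ω = a then 1 else 0)) P := by
    refine Integrable.of_bound (C := D) ?_ ?_
    · exact (hH'.mul (Measurable.ite hAa measurable_const measurable_const)).aestronglyMeasurable
    · filter_upwards [hHD] with ω h1
      split_ifs
      · simpa using h1
      · simpa using (abs_nonneg _).trans h1
  have hp : Measurable (fun ω => p (n + 1) ω a) :=
    (measurable_pi_apply a).comp ((E.measp (n + 1) (by omega)).mono (E.hist_le' _) le_rfl)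
  refine ⟨hi, ?_, ?_⟩
  · refine Integrable.of_bound (C := D) (hH'.mul hp).aestronglyMeasurable ?_
    filter_upwards [hHD] with ω h1
    rw [Real.norm_eq_abs, abs_mul]
    have h2 : |p (n + 1) ω a| ≤ 1 := by
      rw [abs_of_nonneg (E.p_nonneg (by omega) ω a)]; exact E.p_le_one (by omega) ω a
    nlinarith [abs_nonneg (H ω), abs_nonneg (p (n + 1) ω a)]
  · have he : (fun ω => if A (n + 1) ω = a then (1 : ℝ) else 0)
        = ({ω | A (n + 1) ω = a}).indicator (fun _ => (1 : ℝ)) := by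
      ext ω; simp [Set.indicator]
    have h0 := E.arm (n + 1) (by omega) a
    rw [← he] at h0
    refine integral_mul_eq_of_condExp (E.hist_le' n) h0 ?_ hH.stronglyMeasurable hi
    rw [he]
    exact (integrable_const 1).indicator hAa

/-! ### Concentration -/

/-- The process `exp (r S_a(n) - r² N_a(n) / 8)` is a supermartingale, by Hoeffding's lemma. -/
theorem integral_exp_dev (E : IsRun P ν μ ℓ p A Y) (a : Fin K) (r : ℝ) (n : ℕ) :
    Integrable (fun ω => Real.exp (r * dev A Y μ a n ω - r ^ 2 / 8 * pulls A a n ω)) P ∧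
    ∫ ω, Real.exp (r * dev A Y μ a n ω - r ^ 2 / 8 * pulls A a n ω) ∂P ≤ 1 := by
  set Z : ℕ → Ω → ℝ :=
    fun n ω => Real.exp (r * dev A Y μ a n ω - r ^ 2 / 8 * pulls A a n ω) with hZ
  have hZm : ∀ n, Measurable[hist A Y n] (Z n) := fun n =>
    Real.measurable_exp.comp (((measurable_dev a n).const_mul r).sub
      ((measurable_pulls_cast a n).const_mul (r ^ 2 / 8)))
  have hZb : ∀ n : ℕ, ∀ᵐ ω ∂P, |Z n ω| ≤ Real.exp (|r| * n) := by
    intro n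
    filter_upwards [E.ae_dev_le] with ω hω
    rw [abs_of_pos (Real.exp_pos _)]
    refine Real.exp_le_exp.2 ?_
    have h1 : r * dev A Y μ a n ω ≤ |r| * n := by
      refine (le_abs_self _).trans ?_
      rw [abs_mul]
      exact mul_le_mul_of_nonneg_left (hω a n) (abs_nonneg r)
    have h2 : 0 ≤ r ^ 2 / 8 * (pulls A a n ω : ℝ) := by positivity
    linarith
  have hZi : ∀ n, Integrable (Z n) P := fun n =>
    Integrable.of_bound ((hZm n).mono (E.hist_le' n) le_rfl).aestronglyMeasurable
      (Real.exp (|r| * n)) (hZb n)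
  refine ⟨hZi n, ?_⟩
  -- Hoeffding's lemma for the arm distribution
  have := E.prob a
  have hG : ∫ y, Real.exp (r * (y - μ a) - r ^ 2 / 8) ∂(ν a) ≤ 1 := by
    have h1 := (ProbabilityTheory.hasSubgaussianMGF_of_mem_Icc (μ := ν a) (X := fun y => y)
      aemeasurable_id (E.ae_ν a)).mgf_le r
    rw [← E.mean a, ProbabilityTheory.mgf] at h1
    have h2 : ((((‖(1 : ℝ) - 0‖₊ / 2) ^ 2 : NNReal) : ℝ)) * r ^ 2 / 2 = r ^ 2 / 8 := by
      simp; ring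
    rw [h2] at h1
    simp_rw [Real.exp_sub]
    rw [integral_div, div_le_one (Real.exp_pos _)]
    exact h1
  set G := ∫ y, Real.exp (r * (y - μ a) - r ^ 2 / 8) ∂(ν a) with hGdef
  have hexpb : ∀ y ∈ Set.Icc (0 : ℝ) 1, Real.exp (r * (y - μ a) - r ^ 2 / 8) ≤ Real.exp |r| := by
    intro y hy
    refine Real.exp_le_exp.2 ?_
    have h1 : r * (y - μ a) ≤ |r| * 1 := by
      refine (le_abs_self _).trans ?_
      rw [abs_mul]
      refine mul_le_mul_of_nonneg_left ?_ (abs_nonneg r)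
      have h2 := E.μ_mem a
      rw [abs_le]; constructor <;> linarith [hy.1, hy.2, h2.1, h2.2]
    nlinarith [sq_nonneg r]
  have hgm : Measurable (fun y : ℝ => Real.exp (r * (y - μ a) - r ^ 2 / 8)) := by fun_prop
  have hgi : Integrable (fun y : ℝ => Real.exp (r * (y - μ a) - r ^ 2 / 8)) (ν a) := by
    refine Integrable.of_bound hgm.aestronglyMeasurable (Real.exp |r|) ?_
    filter_upwards [E.ae_ν a] with y hy
    rw [Real.norm_eq_abs, abs_of_pos (Real.exp_pos _)]
    exact hexpb y hy
  induction n with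
  | zero => simp [dev_zero, pulls_zero]
  | succ n ih =>
    obtain ⟨h1, h2⟩ := E.reward_step n a
      (g := fun y => Real.exp (r * (y - μ a) - r ^ 2 / 8) - G) (hgm.sub_const G)
      (C := Real.exp |r| + |G|) (fun y hy => (abs_sub _ _).trans (by
        rw [abs_of_pos (Real.exp_pos _)]; linarith [hexpb y hy]))
      (by rw [integral_sub hgi (integrable_const _)]; simp [hGdef]) (hZm n) (hZb n)
    have hle : ∀ ω, Z (n + 1) ω ≤ Z n ω + Z n ω * (if A (n + 1) ω = a then
        Real.exp (r * (Y (n + 1) ω - μ a) - r ^ 2 / 8) - G else 0) := by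
      intro ω
      simp only [hZ, dev_succ, pulls_succ]
      split_ifs
      · push_cast
        rw [show r * (dev A Y μ a n ω + (Y (n + 1) ω - μ a))
            - r ^ 2 / 8 * ((pulls A a n ω : ℝ) + 1)
          = (r * dev A Y μ a n ω - r ^ 2 / 8 * pulls A a n ω)
            + (r * (Y (n + 1) ω - μ a) - r ^ 2 / 8) by ring, Real.exp_add]
        nlinarith [Real.exp_pos (r * dev A Y μ a n ω - r ^ 2 / 8 * pulls A a n ω)]
      · simp
    calc ∫ ω, Z (n + 1) ω ∂P ≤ ∫ ω, (Z n ω + Z n ω * (if A (n + 1) ω = a then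
        Real.exp (r * (Y (n + 1) ω - μ a) - r ^ 2 / 8) - G else 0)) ∂P :=
          integral_mono (hZi _) ((hZi n).add h1) hle
      _ = ∫ ω, Z n ω ∂P := by rw [integral_add (hZi n) h1, h2, add_zero]
      _ ≤ 1 := ih

/-- Chernoff bound at a fixed value `k` of the pull count; the sign `σ = ±1` covers both tails. -/
theorem measureReal_dev_pulls_le (E : IsRun P ν μ ℓ p A Y) (a : Fin K) (n k : ℕ) (hn : 1 ≤ n)
    (hk : 1 ≤ k) (σ : ℝ) (hσ : σ ^ 2 = 1) :
    P.real {ω | pulls A a n ω = k ∧ (k : ℝ) * √(2 * Real.log n / k) ≤ σ * dev A Y μ a n ω}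
      ≤ 1 / (n : ℝ) ^ 4 := by
  set b := √(2 * Real.log n / k) with hb
  have hn0 : (0 : ℝ) < n := by exact_mod_cast hn
  have hk0 : (0 : ℝ) < k := by exact_mod_cast hk
  have hlog : 0 ≤ Real.log n := Real.log_nonneg (by exact_mod_cast hn)
  have hb0 : 0 ≤ b := Real.sqrt_nonneg _
  have hbb : k * b ^ 2 = 2 * Real.log n := by
    rw [hb, Real.sq_sqrt (by positivity)]; field_simp
  -- `r = 4 b σ` is the optimal exponent: `r σ k b - r² k / 8 = 2 k b² = 4 log n`
  obtain ⟨h1, h2⟩ := E.integral_exp_dev a (4 * b * σ) n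
  have h3 := mul_meas_ge_le_integral_of_nonneg
    (Filter.Eventually.of_forall fun ω => (Real.exp_pos _).le) h1 ((n : ℝ) ^ 4)
  have h4 : P.real {ω | pulls A a n ω = k ∧ (k : ℝ) * b ≤ σ * dev A Y μ a n ω}
      ≤ P.real {ω | (n : ℝ) ^ 4 ≤ Real.exp (4 * b * σ * dev A Y μ a n ω
        - (4 * b * σ) ^ 2 / 8 * pulls A a n ω)} := by
    refine measureReal_mono ?_
    rintro ω ⟨hω1, hω2⟩
    simp only [Set.mem_ofPred_eq, hω1]
    have h5 : (n : ℝ) ^ 4 = Real.exp (4 * Real.log n) := by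
      rw [show (4 : ℝ) * Real.log n = ((4 : ℕ) : ℝ) * Real.log n by norm_num, Real.exp_nat_mul,
        Real.exp_log hn0]
    rw [h5]
    refine Real.exp_le_exp.2 ?_
    have h6 : (4 * b * σ) ^ 2 / 8 * (k : ℝ) = 2 * (k * b ^ 2) * σ ^ 2 := by ring
    rw [h6, hσ, hbb]
    nlinarith [mul_le_mul_of_nonneg_left hω2 hb0]
  rw [le_div_iff₀ (by positivity)]
  nlinarith [mul_le_mul_of_nonneg_left h4 (by positivity : (0 : ℝ) ≤ (n : ℝ) ^ 4)]

theorem measureReal_devEvent_le (E : IsRun P ν μ ℓ p A Y) (a : Fin K) (n : ℕ) (hn : 1 ≤ n) :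
    P.real (devEvent A Y μ a n) ≤ 2 * (1 / (n : ℝ) ^ 2) := by
  have hn1 : (1 : ℝ) ≤ n := by exact_mod_cast hn
  set B : ℝ → ℕ → Set Ω := fun σ k =>
    {ω | pulls A a n ω = k ∧ (k : ℝ) * √(2 * Real.log n / k) ≤ σ * dev A Y μ a n ω} with hB
  have hsub : devEvent A Y μ a n
      ⊆ (⋃ k ∈ Finset.Icc 1 n, B 1 k) ∪ ⋃ k ∈ Finset.Icc 1 n, B (-1) k := by
    rintro ω ⟨h1, h2⟩
    have hmem : pulls A a n ω ∈ Finset.Icc 1 n := Finset.mem_Icc.2 ⟨h1, pulls_le a n ω⟩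
    rcases le_abs.1 h2 with h | h
    · left
      exact Set.mem_biUnion (x := pulls A a n ω) hmem ⟨rfl, by simpa using h⟩
    · right
      exact Set.mem_biUnion (x := pulls A a n ω) hmem ⟨rfl, by simpa using h⟩
  have hσ : ∀ σ : ℝ, σ ^ 2 = 1 → P.real (⋃ k ∈ Finset.Icc 1 n, B σ k) ≤ 1 / (n : ℝ) ^ 2 := by
    intro σ h
    calc P.real (⋃ k ∈ Finset.Icc 1 n, B σ k) ≤ ∑ k ∈ Finset.Icc 1 n, P.real (B σ k) :=
          measureReal_biUnion_finset_le _ _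
      _ ≤ ∑ k ∈ Finset.Icc 1 n, 1 / (n : ℝ) ^ 4 := sum_le_sum fun k hk =>
          E.measureReal_dev_pulls_le a n k hn (Finset.mem_Icc.1 hk).1 σ h
      _ = n * (1 / (n : ℝ) ^ 4) := by simp
      _ ≤ 1 / (n : ℝ) ^ 2 := by
          rw [mul_one_div, div_le_div_iff₀ (by positivity) (by positivity)]
          nlinarith [pow_le_pow_right₀ hn1 (show 3 ≤ 4 by norm_num)]
  calc P.real (devEvent A Y μ a n) ≤ _ := measureReal_mono hsub
    _ ≤ _ := measureReal_union_le _ _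
    _ ≤ 1 / (n : ℝ) ^ 2 + 1 / (n : ℝ) ^ 2 :=
        add_le_add (hσ 1 (by norm_num)) (hσ (-1) (by norm_num))
    _ = _ := by ring

/-- Each round pulls `a` with conditional probability at least `ℓ`, and a pull multiplies
`exp (-N_a / 2)` by `exp (-1/2) ≤ 5/8`. -/
theorem integral_exp_pulls (E : IsRun P ν μ ℓ p A Y) (a : Fin K) (n : ℕ) :
    Integrable (fun ω => Real.exp (-(pulls A a n ω / 2 : ℝ))) P ∧
    ∫ ω, Real.exp (-(pulls A a n ω / 2 : ℝ)) ∂P ≤ Real.exp (-(3 / 8 * ℓ * n)) := by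
  set Z : ℕ → Ω → ℝ := fun n ω => Real.exp (-(pulls A a n ω / 2 : ℝ)) with hZ
  have hZm : ∀ n, Measurable[hist A Y n] (Z n) := fun n =>
    Real.measurable_exp.comp ((measurable_pulls_cast a n).div_const 2).neg
  have hZb : ∀ n : ℕ, ∀ᵐ ω ∂P, |Z n ω| ≤ 1 := by
    intro n
    refine Filter.Eventually.of_forall fun ω => ?_
    rw [abs_of_pos (Real.exp_pos _), Real.exp_le_one_iff]
    have : (0 : ℝ) ≤ pulls A a n ω := Nat.cast_nonneg _
    linarith
  have hZi : ∀ n, Integrable (Z n) P := fun n =>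
    Integrable.of_bound ((hZm n).mono (E.hist_le' n) le_rfl).aestronglyMeasurable 1 (hZb n)
  refine ⟨hZi n, ?_⟩
  have hc : Real.exp (-(1 / 2 : ℝ)) ≤ 5 / 8 := by
    rw [Real.exp_neg, inv_le_comm₀ (Real.exp_pos _) (by norm_num)]
    have := Real.quadratic_le_exp_of_nonneg (x := 1 / 2) (by norm_num)
    norm_num at this ⊢
    linarith
  induction n with
  | zero => simp [pulls_zero]
  | succ n ih =>
    obtain ⟨h1, h2, h3⟩ := E.arm_step n a (hZm n) (hZb n)
    have hle : ∀ ω, Z (n + 1) ω ≤ Z n ω - 3 / 8 * (Z n ω * if A (n + 1) ω = a then 1 else 0) := by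
      intro ω
      simp only [hZ, pulls_succ]
      split_ifs
      · push_cast
        rw [show -(((pulls A a n ω : ℝ) + 1) / 2) = -(pulls A a n ω / 2 : ℝ) + -(1 / 2) by ring,
          Real.exp_add]
        nlinarith [Real.exp_pos (-(pulls A a n ω / 2 : ℝ))]
      · simp
    have hstep : ∫ ω, Z (n + 1) ω ∂P ≤ (1 - 3 / 8 * ℓ) * ∫ ω, Z n ω ∂P := by
      calc ∫ ω, Z (n + 1) ω ∂P
          ≤ ∫ ω, (Z n ω - 3 / 8 * (Z n ω * if A (n + 1) ω = a then 1 else 0)) ∂P :=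
            integral_mono (hZi _) ((hZi n).sub (h1.const_mul _)) hle
        _ = ∫ ω, Z n ω ∂P - 3 / 8 * ∫ ω, Z n ω * p (n + 1) ω a ∂P := by
            rw [integral_sub (hZi n) (h1.const_mul _), integral_const_mul, h3]
        _ ≤ ∫ ω, Z n ω ∂P - 3 / 8 * ∫ ω, Z n ω * ℓ ∂P := by
            have hmono : ∫ ω, Z n ω * ℓ ∂P ≤ ∫ ω, Z n ω * p (n + 1) ω a ∂P :=
              integral_mono ((hZi n).mul_const ℓ) h2 fun ω =>
                mul_le_mul_of_nonneg_left (E.le_p (n + 1) (by omega) ω a) (Real.exp_pos _).le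
            linarith
        _ = _ := by rw [integral_mul_const]; ring
    have hpos : 0 ≤ ∫ ω, Z n ω ∂P := integral_nonneg fun ω => (Real.exp_pos _).le
    calc ∫ ω, Z (n + 1) ω ∂P ≤ (1 - 3 / 8 * ℓ) * ∫ ω, Z n ω ∂P := hstep
      _ ≤ Real.exp (-(3 / 8 * ℓ)) * ∫ ω, Z n ω ∂P := by
          gcongr
          linarith [Real.add_one_le_exp (-(3 / 8 * ℓ))]
      _ ≤ Real.exp (-(3 / 8 * ℓ)) * Real.exp (-(3 / 8 * ℓ * n)) := by gcongr
      _ = _ := by rw [← Real.exp_add]; push_cast; ring_nf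

theorem measureReal_pulls_lt (E : IsRun P ν μ ℓ p A Y) (a : Fin K) (n : ℕ) :
    P.real {ω | (pulls A a n ω : ℝ) < ℓ * n / 2} ≤ Real.exp (-(ℓ * n / 8)) := by
  obtain ⟨h1, h2⟩ := E.integral_exp_pulls a n
  have h3 := mul_meas_ge_le_integral_of_nonneg
    (Filter.Eventually.of_forall fun ω => (Real.exp_pos _).le) h1 (Real.exp (-(ℓ * n / 4)))
  have h4 : P.real {ω | (pulls A a n ω : ℝ) < ℓ * n / 2}
      ≤ P.real {ω | Real.exp (-(ℓ * n / 4)) ≤ Real.exp (-(pulls A a n ω / 2 : ℝ))} := by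
    refine measureReal_mono fun ω hω => ?_
    simp only [Set.mem_ofPred_eq] at hω ⊢
    exact Real.exp_le_exp.2 (by linarith)
  have h5 : Real.exp (-(3 / 8 * ℓ * n)) = Real.exp (-(ℓ * n / 4)) * Real.exp (-(ℓ * n / 8)) := by
    rw [← Real.exp_add]; ring_nf
  have h6 := (h3.trans h2)
  rw [h5] at h6
  exact h4.trans (le_of_mul_le_mul_left h6 (Real.exp_pos _))

/-- The squared estimation errors of arm `a`, summed over the rounds in which `a` is pulled, grow
only logarithmically in expectation. The potential `S_a² / N_a` drives the proof: at a pull it loses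
at least half the squared error `(S_a / N_a)²`, and gains a martingale increment and at most
`1 / (N_a + 1)`. -/
theorem integral_sum_dev_sq_le (E : IsRun P ν μ ℓ p A Y) (a : Fin K) (n : ℕ) :
    ∫ ω, ∑ k ∈ range n, (dev A Y μ a k ω / pulls A a k ω) ^ 2
      * (if A (k + 1) ω = a then 1 else 0) ∂P ≤ 2 * (1 + Real.log n) := by
  set W : ℕ → Ω → ℝ := fun k ω => 2 * dev A Y μ a k ω / (pulls A a k ω + 1)
    * (if A (k + 1) ω = a then Y (k + 1) ω - μ a else 0) with hW
  have hWi : ∀ k, Integrable (W k) P ∧ ∫ ω, W k ω ∂P = 0 := by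
    intro k
    have := E.prob a
    have hμ := E.μ_mem a
    refine E.reward_step k a (g := fun y => y - μ a) (C := 1) (D := 2 * k) (by fun_prop) ?_ ?_ ?_ ?_
    · intro y hy
      rw [abs_le]; constructor <;> linarith [hy.1, hy.2, hμ.1, hμ.2]
    · have hid : Integrable (fun y : ℝ => y) (ν a) :=
        Integrable.of_mem_Icc 0 1 aemeasurable_id (E.ae_ν a)
      rw [integral_sub hid (integrable_const _), ← E.mean a]
      simp
    · exact ((measurable_dev a k).const_mul 2).div ((measurable_pulls_cast a k).add_const 1)
    · filter_upwards [E.ae_dev_le] with ω hω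
      have h0 : (0 : ℝ) ≤ pulls A a k ω := Nat.cast_nonneg _
      rw [abs_div, abs_of_pos (by linarith : (0 : ℝ) < pulls A a k ω + 1), abs_mul, abs_two]
      refine (div_le_self (by positivity) (by linarith)).trans ?_
      linarith [hω a k]
  have hpt : ∀ᵐ ω ∂P, ∑ k ∈ range n, (dev A Y μ a k ω / pulls A a k ω) ^ 2
      * (if A (k + 1) ω = a then 1 else 0)
      ≤ 2 * ∑ k ∈ range n, W k ω + 2 * (1 + Real.log n) := by
    filter_upwards [E.ae_Y] with ω hY
    have hind : ∀ j : ℕ, dev A Y μ a j ω ^ 2 / pulls A a j ω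
        + 1 / 2 * ∑ k ∈ range j, (dev A Y μ a k ω / pulls A a k ω) ^ 2
          * (if A (k + 1) ω = a then 1 else 0)
        ≤ ∑ k ∈ range j, W k ω
          + ∑ k ∈ range j, (1 / ((pulls A a k ω : ℝ) + 1)) * (if A (k + 1) ω = a then 1 else 0) := by
      intro j
      induction j with
      | zero => simp [dev_zero]
      | succ j ih =>
        simp only [sum_range_succ, hW, dev_succ, pulls_succ] at ih ⊢
        split_ifs
        · have hx : (Y (j + 1) ω - μ a) ^ 2 ≤ 1 := by
            have h1 := hY j
            have h2 := E.μ_mem a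
            rw [sq_le_one_iff_abs_le_one, abs_le]
            constructor <;> linarith [h1.1, h1.2, h2.1, h2.2]
          set x := Y (j + 1) ω - μ a
          suffices hs : (dev A Y μ a j ω + x) ^ 2 / ((pulls A a j ω + 1 : ℕ) : ℝ)
              + 1 / 2 * (dev A Y μ a j ω / pulls A a j ω) ^ 2
              ≤ dev A Y μ a j ω ^ 2 / pulls A a j ω
                + 2 * dev A Y μ a j ω / (pulls A a j ω + 1) * x
                + 1 / ((pulls A a j ω : ℝ) + 1) by
            linarith
          -- without pulls `dev` vanishes, which agrees with the value `0` of division by zero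
          rcases Nat.eq_zero_or_pos (pulls A a j ω) with h0 | h0
          · rw [h0, dev_eq_zero_of_pulls a j ω h0]
            simpa using hx
          · have hN : (1 : ℝ) ≤ pulls A a j ω := by exact_mod_cast h0
            push_cast
            set N : ℝ := (pulls A a j ω : ℝ)
            set S := dev A Y μ a j ω
            have e1 : (S + x) ^ 2 / (N + 1) = S ^ 2 / (N + 1) + 2 * S / (N + 1) * x
                + x ^ 2 / (N + 1) := by field_simp; ring
            have e2 : x ^ 2 / (N + 1) ≤ 1 / (N + 1) := by gcongr
            have e3 : 1 / 2 * (S / N) ^ 2 ≤ S ^ 2 / N - S ^ 2 / (N + 1) := by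
              have : S ^ 2 / N - S ^ 2 / (N + 1) - 1 / 2 * (S / N) ^ 2
                  = S ^ 2 * (N - 1) / (2 * N ^ 2 * (N + 1)) := by field_simp; ring
              have h2 : 0 ≤ S ^ 2 * (N - 1) / (2 * N ^ 2 * (N + 1)) := by
                have : 0 ≤ N - 1 := by linarith
                positivity
              linarith
            linarith
        · simpa using ih
    have h1 := hind n
    have h2 := sum_pull_comp (A := A) (fun k => 1 / ((k : ℝ) + 1)) a n ω
    have h3 := sum_harmonic_le _ _ (pulls_le (A := A) a n ω)
    have h4 : 0 ≤ dev A Y μ a n ω ^ 2 / pulls A a n ω := by positivity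
    rw [h2] at h1
    linarith
  calc _ ≤ ∫ ω, (2 * ∑ k ∈ range n, W k ω + 2 * (1 + Real.log n)) ∂P := by
        refine integral_mono_of_nonneg (Filter.Eventually.of_forall fun ω => ?_) ?_ hpt
        · exact sum_nonneg fun k _ => by positivity
        · exact ((integrable_finsetSum _ fun k _ => (hWi k).1).const_mul 2).add
            (integrable_const _)
    _ = 2 * (1 + Real.log n) := by
        rw [integral_add ((integrable_finsetSum _ fun k _ => (hWi k).1).const_mul 2)
          (integrable_const _), integral_const_mul,
          integral_finsetSum _ fun k _ => (hWi k).1]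
        simp [hWi]

end IsRun

/-! ### Indices and exploration cost -/

section Index
variable {Ω : Type*} {K : ℕ} {A : ℕ → Ω → Fin K} {Y : ℕ → Ω → ℝ} {μ : Fin K → ℝ}

theorem index_sub_eq {a : Fin K} {n : ℕ} {ω : Ω} (hn : 1 ≤ n) (hN : 1 ≤ pulls A a n ω) :
    ucbIndex A Y a n ω - μ a
      = dev A Y μ a n ω / pulls A a n ω + √(2 * Real.log n / pulls A a n ω) := by
  rw [← empMean_sub (Y := Y) (μ := μ) a n ω (by omega), ucbIndex, if_neg (by omega),
    max_eq_left hN]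
  ring

theorem abs_mean_lt {a : Fin K} {n : ℕ} {ω : Ω} (hN : 1 ≤ pulls A a n ω)
    (hgood : ω ∉ devEvent A Y μ a n) :
    |dev A Y μ a n ω / pulls A a n ω| < √(2 * Real.log n / pulls A a n ω) := by
  have hN' : (0 : ℝ) < pulls A a n ω := by exact_mod_cast hN
  have h : ¬ ((pulls A a n ω : ℝ) * √(2 * Real.log n / pulls A a n ω) ≤ |dev A Y μ a n ω|) :=
    fun h => hgood ⟨hN, h⟩
  rw [abs_div, abs_of_pos hN', div_lt_iff₀ hN']
  linarith

theorem le_index {a : Fin K} {n : ℕ} {ω : Ω} (hn : 1 ≤ n) (hμ : μ a ≤ 1)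
    (hgood : ω ∉ devEvent A Y μ a n) : μ a ≤ ucbIndex A Y a n ω := by
  rcases Nat.eq_zero_or_pos (pulls A a n ω) with h0 | h0
  · rw [ucbIndex, if_neg (by omega), empMean, if_pos h0]
    linarith [Real.sqrt_nonneg (2 * Real.log n / (max (pulls A a n ω) 1 : ℕ))]
  · have h1 := index_sub_eq (Y := Y) (μ := μ) hn h0
    have h2 := (abs_lt.1 (abs_mean_lt h0 hgood)).1
    linarith

/-- The per-pull exploration cost of an arm pulled `k` times so far: its doubled confidence width,
with `log n` bounded by `L`, in excess of `Δ / 2`. The extra `2` at `k = 0` pays for the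
convention that the empirical mean of an unpulled arm is `1`. -/
def width (L Δ : ℝ) (k : ℕ) : ℝ :=
  max (√(8 * L) / √(max k 1 : ℕ) - Δ / 2) 0 + if k = 0 then 2 else 0

theorem width_nonneg (L Δ : ℝ) (k : ℕ) : 0 ≤ width L Δ k := by
  unfold width
  have := le_max_right (√(8 * L) / √(max k 1 : ℕ) - Δ / 2) 0
  split_ifs <;> linarith

theorem width_le (L Δ : ℝ) (hΔ : 0 < Δ) (k : ℕ) : width L Δ k ≤ √(8 * L) + 2 := by
  unfold width
  have h1 : √(8 * L) / √(max k 1 : ℕ) ≤ √(8 * L) := by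
    refine div_le_self (Real.sqrt_nonneg _) ?_
    rw [Real.one_le_sqrt]
    exact_mod_cast le_max_right k 1
  have h2 : max (√(8 * L) / √(max k 1 : ℕ) - Δ / 2) 0 ≤ √(8 * L) :=
    max_le (by linarith) (Real.sqrt_nonneg _)
  split_ifs <;> linarith

theorem sum_width_le (L Δ : ℝ) (hL : 0 ≤ L) (hΔ : 0 < Δ) (n : ℕ) :
    ∑ k ∈ range n, width L Δ k ≤ √(8 * L) + 2 + 16 * L / Δ := by
  calc ∑ k ∈ range n, width L Δ k ≤ ∑ k ∈ range (n + 1), width L Δ k :=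
        sum_le_sum_of_subset_of_nonneg (range_mono (by omega)) fun k _ _ => width_nonneg L Δ k
    _ = (∑ k ∈ range n, max (√(8 * L) / √((k : ℝ) + 1) - Δ / 2) 0) + width L Δ 0 := by
        rw [sum_range_succ']
        congr 1
        refine sum_congr rfl fun k _ => ?_
        simp [width]
    _ ≤ √(8 * L) ^ 2 / (Δ / 2) + (√(8 * L) + 2) :=
        add_le_add (sum_threshold_le _ _ (Real.sqrt_nonneg _) (by positivity) n)
          (width_le L Δ hΔ 0)
    _ = _ := by
        rw [Real.sq_sqrt (by positivity)]; field_simp; ring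

/-- Splitting `Δ` into halves, one offsets the confidence width and the other the estimation error
`d = S_a / N_a`, through `2 d ≤ Δ / 2 + (2 / Δ) d²`. No concentration of `d` is assumed. -/
theorem two_index_sub_le {a : Fin K} {n : ℕ} {ω : Ω} {L Δ : ℝ} (hn : 1 ≤ n) (hΔ : 0 < Δ)
    (hL : Real.log n ≤ L) (hμ : 0 ≤ μ a) :
    2 * (ucbIndex A Y a n ω - μ a) - Δ
      ≤ width L Δ (pulls A a n ω) + 2 / Δ * (dev A Y μ a n ω / pulls A a n ω) ^ 2 := by
  set N := pulls A a n ω with hN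
  have hb : 2 * √(2 * Real.log n / (max N 1 : ℕ)) ≤ √(8 * L) / √(max N 1 : ℕ) := by
    rw [← Real.sqrt_div' _ (Nat.cast_nonneg _)]
    refine Real.le_sqrt_of_sq_le ?_
    have h0 : 0 ≤ Real.log n := Real.log_nonneg (by exact_mod_cast hn)
    rw [mul_pow, Real.sq_sqrt (by positivity), ← mul_div_assoc]
    exact div_le_div_of_nonneg_right (by linarith) (Nat.cast_nonneg _)
  have hmax := le_max_left (√(8 * L) / √(max N 1 : ℕ) - Δ / 2) 0
  have hU : ucbIndex A Y a n ω = empMean A Y a n ω + √(2 * Real.log n / (max N 1 : ℕ)) := by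
    rw [ucbIndex, if_neg (by omega)]
  rw [hU, width]
  rcases Nat.eq_zero_or_pos N with h0 | h0
  · rw [if_pos h0, empMean, if_pos (hN ▸ h0)]
    have : 0 ≤ 2 / Δ * (dev A Y μ a n ω / N) ^ 2 := by positivity
    linarith
  · rw [if_neg (by omega)]
    have h1 := empMean_sub (Y := Y) (μ := μ) a n ω (show pulls A a n ω ≠ 0 by omega)
    rw [← hN] at h1
    have h2 : 2 * (dev A Y μ a n ω / N) ≤ Δ / 2 + 2 / Δ * (dev A Y μ a n ω / N) ^ 2 := by
      set d := dev A Y μ a n ω / N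
      have : Δ / 2 + 2 / Δ * d ^ 2 - 2 * d = (Δ - 2 * d) ^ 2 / (2 * Δ) := by field_simp; ring
      have h3 : 0 ≤ (Δ - 2 * d) ^ 2 / (2 * Δ) := by positivity
      linarith
    linarith

theorem index_sub_le {a : Fin K} {n : ℕ} {ω : Ω} {ℓ : ℝ} (hn : 1 ≤ n) (hℓ : 0 < ℓ)
    (hgood : ω ∉ devEvent A Y μ a n) (hN : ℓ * n / 2 ≤ pulls A a n ω) :
    ucbIndex A Y a n ω - μ a ≤ √(16 * Real.log n / (ℓ * n)) := by
  have hn0 : (0 : ℝ) < n := by exact_mod_cast hn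
  have hlog : 0 ≤ Real.log n := Real.log_nonneg (by exact_mod_cast hn)
  have hN0 : (0 : ℝ) < pulls A a n ω := lt_of_lt_of_le (by positivity) hN
  have hN1 : 1 ≤ pulls A a n ω := by exact_mod_cast hN0
  rw [index_sub_eq hn hN1]
  have h1 := (abs_lt.1 (abs_mean_lt hN1 hgood)).2
  have h2 : 2 * √(2 * Real.log n / pulls A a n ω) ≤ √(16 * Real.log n / (ℓ * n)) := by
    refine Real.le_sqrt_of_sq_le ?_
    rw [mul_pow, Real.sq_sqrt (by positivity)]
    calc 2 ^ 2 * (2 * Real.log n / pulls A a n ω) ≤ 2 ^ 2 * (2 * Real.log n / (ℓ * n / 2)) := by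
          gcongr
      _ = _ := by field_simp; ring
  linarith

/-- Optimism: if `U` dominates `μ` and `v` beats the optimal `q` for `U`, the gap of `v` is at most
the `v`-average of `U - μ`. -/
theorem gap_le_sum {v q U : Fin K → ℝ} {M : ℝ} (hq : ∀ a, 0 ≤ q a) (hqM : M ≤ dot q μ)
    (hmax : dot q U ≤ dot v U) (hU : ∀ a, μ a ≤ U a) :
    M - dot v μ ≤ ∑ a, v a * (U a - μ a) := by
  have h1 : dot q μ ≤ dot q U := sum_le_sum fun a _ => mul_le_mul_of_nonneg_left (hU a) (hq a)
  have h2 : ∑ a, v a * (U a - μ a) = dot v U - dot v μ := by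
    simp [dot, mul_sub, sum_sub_distrib]
  linarith

theorem measurableSet_devEvent {mΩ : MeasurableSpace Ω} (hA : ∀ t, Measurable (A t))
    (hY : ∀ t, Measurable (Y t)) (a : Fin K) (n : ℕ) : MeasurableSet (devEvent A Y μ a n) := by
  have h1 := (measurable_pulls (A := A) (Y := Y) a n).mono (hist_le hA hY n) le_rfl
  have h2 := (measurable_pulls_cast (A := A) (Y := Y) a n).mono (hist_le hA hY n) le_rfl
  have h3 := (measurable_dev (A := A) (Y := Y) (μ := μ) a n).mono (hist_le hA hY n) le_rfl
  refine MeasurableSet.inter (h1 measurableSet_Ici)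
    (measurableSet_le (h2.mul (h2.const_div _).sqrt) ?_)
  simpa using h3.norm

end Index

namespace IsRun
variable {Ω : Type*} [MeasurableSpace Ω] {K : ℕ} {P : Measure Ω} [IsProbabilityMeasure P]
  {ν : Fin K → Measure ℝ} {μ : Fin K → ℝ} {ℓ : ℝ} {p : ℕ → Ω → Fin K → ℝ}
  {A : ℕ → Ω → Fin K} {Y : ℕ → Ω → ℝ}

/-- Expected exploration cost of one arm. Weights `p_{k+1}(a)` are exchanged for indicators of pulls,
so that the widths are summed along the pull counts and the squared errors fall under
`integral_sum_dev_sq_le`. -/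
theorem explore_cost (E : IsRun P ν μ ℓ p A Y) (a : Fin K) {L Δ : ℝ} (hL : 0 ≤ L) (hΔ : 0 < Δ) :
    (∀ k, Integrable (fun ω => (width L Δ (pulls A a k ω)
      + 2 / Δ * (dev A Y μ a k ω / pulls A a k ω) ^ 2) * p (k + 1) ω a) P) ∧
    ∀ n : ℕ, ∑ k ∈ range n, ∫ ω, (width L Δ (pulls A a k ω)
      + 2 / Δ * (dev A Y μ a k ω / pulls A a k ω) ^ 2) * p (k + 1) ω a ∂P
      ≤ √(8 * L) + 2 + 16 * L / Δ + 4 / Δ * (1 + Real.log n) := by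
  have hdm : ∀ k, Measurable[hist A Y k]
      (fun ω => (dev A Y μ a k ω / pulls A a k ω) ^ 2) := fun k =>
    ((measurable_dev a k).div (measurable_pulls_cast a k)).pow_const 2
  have hdb : ∀ k : ℕ, ∀ᵐ ω ∂P, (dev A Y μ a k ω / pulls A a k ω) ^ 2 ≤ (k : ℝ) ^ 2 := by
    intro k
    filter_upwards [E.ae_dev_le] with ω hω
    rw [sq_le_sq, abs_div, Nat.abs_cast, Nat.abs_cast]
    rcases Nat.eq_zero_or_pos (pulls A a k ω) with h0 | h0
    · rw [h0]; simp
    · exact (div_le_self (abs_nonneg _) (by exact_mod_cast h0)).trans (hω a k)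
  have hwm : ∀ k, Measurable[hist A Y k] (fun ω => width L Δ (pulls A a k ω)) := fun k =>
    (measurable_from_nat (f := width L Δ)).comp (measurable_pulls a k)
  have hstep := fun k => E.arm_step k a
    (H := fun ω => width L Δ (pulls A a k ω) + 2 / Δ * (dev A Y μ a k ω / pulls A a k ω) ^ 2)
    (D := √(8 * L) + 2 + 2 / Δ * (k : ℝ) ^ 2) ((hwm k).add ((hdm k).const_mul _)) (by
      filter_upwards [hdb k] with ω hω
      rw [abs_of_nonneg (add_nonneg (width_nonneg _ _ _) (by positivity))]
      exact add_le_add (width_le L Δ hΔ _) (by gcongr))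
  refine ⟨fun k => (hstep k).2.1, fun n => ?_⟩
  have hdstep := fun k => (E.arm_step k a (hdm k) (D := (k : ℝ) ^ 2) (by
      filter_upwards [hdb k] with ω hω
      rwa [abs_of_nonneg (by positivity)])).1
  have hwstep := fun k => (E.arm_step k a (hwm k) (D := √(8 * L) + 2) (by
      refine Filter.Eventually.of_forall fun ω => ?_
      rw [abs_of_nonneg (width_nonneg _ _ _)]
      exact width_le L Δ hΔ _)).1
  have hws : Integrable (fun ω => ∑ k ∈ range n, width L Δ (pulls A a k ω)
      * (if A (k + 1) ω = a then 1 else 0)) P := integrable_finsetSum _ fun k _ => hwstep k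
  have hds : Integrable (fun ω => ∑ k ∈ range n, (dev A Y μ a k ω / pulls A a k ω) ^ 2
      * (if A (k + 1) ω = a then 1 else 0)) P := integrable_finsetSum _ fun k _ => hdstep k
  calc ∑ k ∈ range n, ∫ ω, (width L Δ (pulls A a k ω)
      + 2 / Δ * (dev A Y μ a k ω / pulls A a k ω) ^ 2) * p (k + 1) ω a ∂P
      = ∑ k ∈ range n, ∫ ω, (width L Δ (pulls A a k ω)
        + 2 / Δ * (dev A Y μ a k ω / pulls A a k ω) ^ 2)
          * (if A (k + 1) ω = a then 1 else 0) ∂P :=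
        sum_congr rfl fun k _ => (hstep k).2.2.symm
    _ = ∫ ω, (∑ k ∈ range n, width L Δ (pulls A a k ω) * (if A (k + 1) ω = a then 1 else 0)
        + 2 / Δ * ∑ k ∈ range n, (dev A Y μ a k ω / pulls A a k ω) ^ 2
          * (if A (k + 1) ω = a then 1 else 0)) ∂P := by
        rw [← integral_finsetSum _ fun k _ => (hstep k).1]
        congr 1
        ext ω
        rw [mul_sum, ← sum_add_distrib]
        exact sum_congr rfl fun k _ => by ring
    _ = ∫ ω, ∑ k ∈ range n, width L Δ (pulls A a k ω) * (if A (k + 1) ω = a then 1 else 0) ∂P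
        + 2 / Δ * ∫ ω, ∑ k ∈ range n, (dev A Y μ a k ω / pulls A a k ω) ^ 2
          * (if A (k + 1) ω = a then 1 else 0) ∂P := by
        rw [integral_add hws (hds.const_mul _), integral_const_mul]
    _ ≤ (√(8 * L) + 2 + 16 * L / Δ) + 2 / Δ * (2 * (1 + Real.log n)) := by
        refine add_le_add ?_ (mul_le_mul_of_nonneg_left (E.integral_sum_dev_sq_le a n)
          (by positivity))
        calc _ ≤ ∫ _, (√(8 * L) + 2 + 16 * L / Δ) ∂P := by
              refine integral_mono hws (integrable_const _) fun ω => ?_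
              simp only [sum_pull_comp]
              exact sum_width_le L Δ hL hΔ _
          _ = _ := by simp
    _ = _ := by ring

end IsRun

/-! ### Bounds for a single round -/

section Round
variable {Ω : Type*} {K : ℕ} {A : ℕ → Ω → Fin K} {Y : ℕ → Ω → ℝ} {μ : Fin K → ℝ}

/-- A nonzero gap is at least `Δ`, hence at most twice the optimistic bound minus `Δ`; this moves
the threshold `Δ` inside the average over arms. -/
theorem gap_le_explore {v q : Fin K → ℝ} {n : ℕ} {ω : Ω} {L Δ M : ℝ} (hn : 1 ≤ n) (hΔ : 0 < Δ)
    (hL : Real.log n ≤ L) (hv : ∀ a, 0 ≤ v a) (hv1 : ∑ a, v a = 1) (hq : ∀ a, 0 ≤ q a)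
    (hqM : M ≤ dot q μ)
    (hmax : dot q (fun a => ucbIndex A Y a n ω) ≤ dot v (fun a => ucbIndex A Y a n ω))
    (hμ : ∀ a, μ a ∈ Set.Icc (0 : ℝ) 1) (hgood : ∀ a, ω ∉ devEvent A Y μ a n)
    (hgap : M - dot v μ ≤ 0 ∨ Δ ≤ M - dot v μ) :
    M - dot v μ ≤ ∑ a, (width L Δ (pulls A a n ω)
      + 2 / Δ * (dev A Y μ a n ω / pulls A a n ω) ^ 2) * v a := by
  rcases hgap with h | h
  · refine h.trans (sum_nonneg fun a _ => mul_nonneg ?_ (hv a))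
    exact add_nonneg (width_nonneg _ _ _) (by positivity)
  · have h1 := gap_le_sum hq hqM hmax fun a => le_index hn (hμ a).2 (hgood a)
    calc M - dot v μ ≤ 2 * ∑ a, v a * (ucbIndex A Y a n ω - μ a) - Δ * ∑ a, v a := by
          rw [hv1]; linarith
      _ = ∑ a, (2 * (ucbIndex A Y a n ω - μ a) - Δ) * v a := by
          rw [mul_sum, mul_sum, ← sum_sub_distrib]
          exact sum_congr rfl fun a _ => by ring
      _ ≤ _ := sum_le_sum fun a _ =>
          mul_le_mul_of_nonneg_right (two_index_sub_le hn hΔ hL (hμ a).1) (hv a)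

/-- Once all arms have been pulled about `ℓ n / 2` times and `n` is large, every index is within
less than `Δ` of its mean, so that the selected action is optimal. -/
theorem gap_le_exploit {v q : Fin K → ℝ} {n : ℕ} {ω : Ω} {ℓ Δ M : ℝ} (hn : 1 ≤ n) (hΔ : 0 < Δ)
    (hℓ : 0 < ℓ) (hlog : 16 / (Δ ^ 2 * ℓ) * Real.log n < n)
    (hv : ∀ a, 0 ≤ v a) (hv1 : ∑ a, v a = 1) (hq : ∀ a, 0 ≤ q a)
    (hqM : M ≤ dot q μ)
    (hmax : dot q (fun a => ucbIndex A Y a n ω) ≤ dot v (fun a => ucbIndex A Y a n ω))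
    (hμ : ∀ a, μ a ∈ Set.Icc (0 : ℝ) 1) (hgood : ∀ a, ω ∉ devEvent A Y μ a n)
    (hN : ∀ a, ℓ * n / 2 ≤ pulls A a n ω)
    (hgap : M - dot v μ ≤ 0 ∨ Δ ≤ M - dot v μ) :
    M - dot v μ ≤ 0 := by
  rcases hgap with h | h
  · exact h
  · exfalso
    have hn0 : (0 : ℝ) < n := by exact_mod_cast hn
    have h1 := gap_le_sum hq hqM hmax fun a => le_index hn (hμ a).2 (hgood a)
    have h2 : ∑ a, v a * (ucbIndex A Y a n ω - μ a) ≤ √(16 * Real.log n / (ℓ * n)) := by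
      calc _ ≤ ∑ a, v a * √(16 * Real.log n / (ℓ * n)) := sum_le_sum fun a _ =>
            mul_le_mul_of_nonneg_left (index_sub_le hn hℓ (hgood a) (hN a)) (hv a)
        _ = _ := by rw [← sum_mul, hv1, one_mul]
    have h3 : √(16 * Real.log n / (ℓ * n)) < Δ := by
      rw [Real.sqrt_lt' hΔ, div_lt_iff₀ (by positivity)]
      rw [div_mul_eq_mul_div, div_lt_iff₀ (by positivity)] at hlog
      linarith
    linarith

end Round

theorem explore_numeric {L l Δ : ℝ} (hL : 8 / 3 ≤ L) (hl : l ≤ L) (hΔ : 0 < Δ) (hΔ1 : Δ ≤ 1) :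
    √(8 * L) + 2 + 16 * L / Δ + 4 / Δ * (1 + l) ≤ 24 * L / Δ := by
  have h1 : √(8 * L) ≤ L + 2 := by
    rw [Real.sqrt_le_left (by linarith)]
    nlinarith [sq_nonneg (L - 2)]
  have h2 : √(8 * L) + 2 ≤ (L + 4) / Δ := by
    rw [le_div_iff₀ hΔ]
    nlinarith
  have h3 : (L + 4) / Δ + 16 * L / Δ + 4 / Δ * (1 + l) = (L + 4 + 16 * L + 4 * (1 + l)) / Δ := by
    ring
  have h4 : (L + 4 + 16 * L + 4 * (1 + l)) / Δ ≤ 24 * L / Δ :=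
    div_le_div_of_nonneg_right (by linarith) hΔ.le
  linarith

/-- The rounds outside `Q` have `ℓ n / 16 ≥ 5`, so half of the exponent already contributes the
factor `exp (-5) ≤ 1/6`. -/
theorem sum_exp_tail_le {ℓ : ℝ} (hℓ : 0 < ℓ) (hℓ1 : ℓ ≤ 1) (T : ℕ) (Q : ℕ → Prop)
    [DecidablePred Q] (hQ : ∀ n, ¬ Q n → 80 / ℓ ≤ n) :
    ∑ n ∈ range T, (if Q n then 0 else Real.exp (-(ℓ * n / 8))) ≤ 3 / ℓ ^ 2 := by
  have h6 : Real.exp (-5) ≤ 1 / 6 := by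
    rw [Real.exp_neg, ← one_div]
    exact one_div_le_one_div_of_le (by norm_num) (by linarith [Real.add_one_le_exp (5 : ℝ)])
  calc ∑ n ∈ range T, (if Q n then 0 else Real.exp (-(ℓ * n / 8)))
      ≤ ∑ n ∈ range T, 1 / 6 * Real.exp (-(ℓ / 16 * n)) := by
        refine sum_le_sum fun n _ => ?_
        split_ifs with h
        · positivity
        · have h1 := (div_le_iff₀ hℓ).1 (hQ n h)
          calc Real.exp (-(ℓ * n / 8)) ≤ Real.exp (-5 + -(ℓ / 16 * n)) :=
                Real.exp_le_exp.2 (by linarith)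
            _ ≤ _ := by
                rw [Real.exp_add]
                exact mul_le_mul_of_nonneg_right h6 (Real.exp_pos _).le
    _ ≤ 1 / 6 * (1 + 1 / (ℓ / 16)) := by
        rw [← mul_sum]
        exact mul_le_mul_of_nonneg_left (sum_exp_le _ (by positivity) T) (by norm_num)
    _ ≤ 3 / ℓ ^ 2 := by
        rw [le_div_iff₀ (by positivity)]
        have : 1 / 6 * (1 + 1 / (ℓ / 16)) * ℓ ^ 2 = (ℓ ^ 2 + 16 * ℓ) / 6 := by field_simp
        rw [this]
        nlinarith

namespace IsRun
variable {Ω : Type*} [MeasurableSpace Ω] {K : ℕ} {P : Measure Ω} [IsProbabilityMeasure P]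
  {ν : Fin K → Measure ℝ} {μ : Fin K → ℝ} {ℓ : ℝ} {p : ℕ → Ω → Fin K → ℝ}
  {A : ℕ → Ω → Fin K} {Y : ℕ → Ω → ℝ}

theorem sum_devEvent_le (E : IsRun P ν μ ℓ p A Y) (a : Fin K) (T : ℕ) :
    ∑ n ∈ range T, P.real (devEvent A Y μ a n) ≤ 4 := by
  calc ∑ n ∈ range T, P.real (devEvent A Y μ a n)
      ≤ ∑ n ∈ range (T + 1), P.real (devEvent A Y μ a n) :=
        sum_le_sum_of_subset_of_nonneg (range_mono (by omega)) fun _ _ _ => measureReal_nonneg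
    _ = ∑ n ∈ range T, P.real (devEvent A Y μ a (n + 1)) := by
        have : devEvent A Y μ a 0 = ∅ := by
          ext ω; simp [devEvent, pulls_zero]
        rw [sum_range_succ', this]
        simp
    _ ≤ ∑ n ∈ range T, 2 * (1 / ((n : ℝ) + 1) ^ 2) := by
        refine sum_le_sum fun n _ => ?_
        have := E.measureReal_devEvent_le a (n + 1) (by omega)
        push_cast at this
        exact this
    _ ≤ 4 := by
        rw [← mul_sum]
        linarith [sum_inv_sq_le T]

/-- Expected gap in round `n + 1`: the first round costs `1`, deviations cost their probability, and the
remainder is the exploration cost while `n ≤ m` and the probability of too few pulls afterwards. -/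
theorem integral_gap_le (E : IsRun P ν μ ℓ p A Y) {Δ L M : ℝ} {q : Fin K → ℝ}
    (hΔ : 0 < Δ) (m : ℕ) (hL : 0 ≤ L) (hmL : Real.log m ≤ L)
    (hm : ∀ n : ℕ, m < n → 16 / (Δ ^ 2 * ℓ) * Real.log n < n)
    (hq : ∀ a, 0 ≤ q a) (hqM : M ≤ dot q μ) (n : ℕ)
    (hmax : ∀ ω, dot q (fun a => ucbIndex A Y a n ω)
      ≤ dot (p (n + 1) ω) (fun a => ucbIndex A Y a n ω))
    (hgap : ∀ ω, M - dot (p (n + 1) ω) μ ≤ 0 ∨ Δ ≤ M - dot (p (n + 1) ω) μ)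
    (hgap0 : ∀ ω, 0 ≤ M - dot (p (n + 1) ω) μ)
    (hgap1 : ∀ ω, M - dot (p (n + 1) ω) μ ≤ 1) :
    ∫ ω, (M - dot (p (n + 1) ω) μ) ∂P ≤ (if n = 0 then 1 else 0)
      + ∑ a, P.real (devEvent A Y μ a n)
      + ∑ a, (if n ≤ m then ∫ ω, (width L Δ (pulls A a n ω)
        + 2 / Δ * (dev A Y μ a n ω / pulls A a n ω) ^ 2) * p (n + 1) ω a ∂P else 0)
      + ∑ _a : Fin K, (if n ≤ m then 0 else Real.exp (-(ℓ * n / 8))) := by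
  have hpn := fun ω a => E.p_nonneg (t := n + 1) (by omega) ω a
  have hp1 := fun ω => E.sum_p (n + 1) (by omega) ω
  set D : Fin K → Ω → ℝ := fun a => (devEvent A Y μ a n).indicator 1 with hD
  set W : Fin K → Ω → ℝ := fun a ω => (width L Δ (pulls A a n ω)
        + 2 / Δ * (dev A Y μ a n ω / pulls A a n ω) ^ 2) * p (n + 1) ω a with hW
  set S : Fin K → Set Ω := fun a => {ω | (pulls A a n ω : ℝ) < ℓ * n / 2} with hS
  have hDm := fun a => measurableSet_devEvent (μ := μ) E.measA E.measY a n
  have hSm : ∀ a, MeasurableSet (S a) := fun a =>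
    measurableSet_lt ((measurable_pulls_cast (A := A) (Y := Y) a n).mono
      (E.hist_le' n) le_rfl) measurable_const
  have hDi : ∀ a, Integrable (D a) P := fun a =>
    (integrable_const (1 : ℝ)).indicator (hDm a)
  have hSi : ∀ a, Integrable ((S a).indicator (1 : Ω → ℝ)) P := fun a =>
    (integrable_const (1 : ℝ)).indicator (hSm a)
  have hWi : ∀ a, Integrable (W a) P := fun a => (E.explore_cost a hL hΔ).1 n
  have hD0 : ∀ a ω, 0 ≤ D a ω := fun a ω => Set.indicator_nonneg (fun _ _ => zero_le_one) ω
  have hS0 : ∀ a ω, 0 ≤ (S a).indicator (1 : Ω → ℝ) ω :=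
    fun a ω => Set.indicator_nonneg (fun _ _ => zero_le_one) ω
  have hW0 : ∀ a ω, 0 ≤ W a ω := fun a ω =>
    mul_nonneg (add_nonneg (width_nonneg _ _ _) (by positivity)) (hpn ω a)
  have hpt : ∀ ω, M - dot (p (n + 1) ω) μ ≤ (if n = 0 then 1 else 0) + ∑ a, D a ω
      + ∑ a, (if n ≤ m then W a ω else 0)
      + ∑ a, if n ≤ m then 0 else (S a).indicator 1 ω := by
    intro ω
    have hDs : 0 ≤ ∑ a, D a ω := sum_nonneg fun a _ => hD0 a ω
    have hWs : 0 ≤ ∑ a, (if n ≤ m then W a ω else 0) := sum_nonneg fun a _ => by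
      split_ifs; exacts [hW0 a ω, le_rfl]
    have hSs : 0 ≤ ∑ a, if n ≤ m then 0 else (S a).indicator (1 : Ω → ℝ) ω :=
      sum_nonneg fun a _ => by split_ifs; exacts [le_rfl, hS0 a ω]
    have hi : (0 : ℝ) ≤ if n = 0 then 1 else 0 := by split_ifs <;> norm_num
    by_cases hn : n = 0
    · rw [if_pos hn]; linarith [hgap1 ω]
    have hn1 : 1 ≤ n := by omega
    by_cases hbad : ∃ a, ω ∈ devEvent A Y μ a n
    · obtain ⟨a, ha⟩ := hbad
      have : D a ω ≤ ∑ a, D a ω := single_le_sum (f := fun a => D a ω)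
        (fun b _ => hD0 b ω) (mem_univ a)
      rw [hD] at this
      simp only [Set.indicator_of_mem ha, Pi.one_apply] at this
      linarith [hgap1 ω]
    push Not at hbad
    by_cases hnm : n ≤ m
    · have h1 : Real.log n ≤ L := le_trans
        (Real.log_le_log (by exact_mod_cast hn1) (by exact_mod_cast hnm)) hmL
      have h2 := gap_le_explore hn1 hΔ h1 (hpn ω) (hp1 ω) hq hqM (hmax ω) E.μ_mem hbad (hgap ω)
      simp only [if_pos hnm] at hWs hSs ⊢
      linarith
    · by_cases hN : ∃ a, ω ∈ S a
      · obtain ⟨a, ha⟩ := hN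
        have : (S a).indicator (1 : Ω → ℝ) ω ≤ ∑ a, (S a).indicator (1 : Ω → ℝ) ω :=
          single_le_sum (f := fun a => (S a).indicator (1 : Ω → ℝ) ω)
            (fun b _ => hS0 b ω) (mem_univ a)
        simp only [Set.indicator_of_mem ha, Pi.one_apply] at this
        simp only [if_neg hnm] at hWs hSs ⊢
        linarith [hgap1 ω]
      · push Not at hN
        have h2 := gap_le_exploit hn1 hΔ E.pos (hm n (by omega)) (hpn ω) (hp1 ω) hq hqM (hmax ω)
          E.μ_mem hbad (fun a => not_lt.1 (hN a)) (hgap ω)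
        linarith
  have hWi' : ∀ a, Integrable (fun ω => if n ≤ m then W a ω else 0) P := fun a => by
    split_ifs; exacts [hWi a, integrable_const 0]
  have hSi' : ∀ a, Integrable (fun ω => if n ≤ m then 0 else (S a).indicator (1 : Ω → ℝ) ω) P :=
    fun a => by split_ifs; exacts [integrable_const 0, hSi a]
  have hDs : Integrable (fun ω => ∑ a, D a ω) P := integrable_finsetSum _ fun a _ => hDi a
  have hWs : Integrable (fun ω => ∑ a, if n ≤ m then W a ω else 0) P :=
    integrable_finsetSum _ fun a _ => hWi' a
  have hSs : Integrable (fun ω => ∑ a, if n ≤ m then 0 else (S a).indicator (1 : Ω → ℝ) ω) P :=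
    integrable_finsetSum _ fun a _ => hSi' a
  have hc : Integrable (fun _ : Ω => (if n = 0 then 1 else 0 : ℝ)) P := integrable_const _
  refine (integral_mono_of_nonneg (Filter.Eventually.of_forall hgap0)
    (((hc.add hDs).add hWs).add hSs) (Filter.Eventually.of_forall hpt)).trans ?_
  rw [integral_add' ((hc.add hDs).add hWs) hSs, integral_add' (hc.add hDs) hWs,
    integral_add' hc hDs, integral_finsetSum _ fun a _ => hDi a,
    integral_finsetSum _ fun a _ => hWi' a, integral_finsetSum _ fun a _ => hSi' a]
  refine add_le_add (add_le_add (add_le_add (by simp) ?_) ?_) ?_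
  · refine le_of_eq (sum_congr rfl fun a _ => ?_)
    exact integral_indicator_one (hDm a)
  · refine le_of_eq (sum_congr rfl fun a _ => ?_)
    split_ifs <;> simp [hW]
  · refine sum_le_sum fun a _ => ?_
    split_ifs
    · simp
    · rw [integral_indicator_one (hSm a)]
      exact E.measureReal_pulls_lt a n

end IsRun

/-! ### The regret bound -/

/-- **Statement 0** (Theorem 1, Case 1): the diversity-preserving UCB algorithm, run on any
bandit problem over `D_{[0,1]}` with a finite-polytope diversity-preserving set `Pset`, has
regret at most `(24 K (ln(1+T))² + K + 2)/Δ` for every horizon `T ≥ 1`. -/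
theorem ucb_regret_general_bound
    {Ω : Type*} [MeasurableSpace Ω] {K : ℕ} (hK : 1 ≤ K)
    (P : Measure Ω) [IsProbabilityMeasure P]
    -- the bandit problem: distributions over [0,1] with means μ
    (ν : Fin K → Measure ℝ) (hνprob : ∀ a, IsProbabilityMeasure (ν a))
    (hνsupp : ∀ a, (ν a) (Set.Icc (0 : ℝ) 1)ᶜ = 0)
    (μ : Fin K → ℝ) (hμ : ∀ a, μ a = ∫ x, x ∂(ν a))
    -- the diversity-preserving set: a finite polytope of probability vectors
    (ExtP : Finset (Fin K → ℝ)) (hExtNe : ExtP.Nonempty)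
    (hExtProb : ∀ p ∈ ExtP, (∀ a, 0 ≤ p a) ∧ ∑ a, p a = 1)
    (Pset : Set (Fin K → ℝ)) (hPset : Pset = convexHull ℝ (ExtP : Set (Fin K → ℝ)))
    -- optimal value M and minimal positive gap Δ (at least one p ∈ Ext(Pset) has Δ(p) > 0)
    (M : ℝ) (hM : IsGreatest {x | ∃ p ∈ Pset, dot p μ = x} M)
    (Δ : ℝ) (hΔ : IsLeast {x | ∃ p ∈ ExtP, M - dot p μ = x ∧ 0 < x} Δ)
    -- the processes generated by the diversity-preserving UCB algorithm
    (p : ℕ → Ω → Fin K → ℝ) (A : ℕ → Ω → Fin K) (Y : ℕ → Ω → ℝ)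
    (hA : ∀ t, Measurable (A t)) (hY : ∀ t, Measurable (Y t))
    (hpmeas : ∀ t, 1 ≤ t → Measurable[hist A Y (t - 1)] (p t))
    -- UCB action choice: p_t maximizes ⟨·, U(t-1)⟩ over Ext(Pset)
    (hUCB : ∀ t, 1 ≤ t → ∀ ω, p t ω ∈ ExtP ∧
      ∀ q ∈ ExtP, dot q (fun a => ucbIndex A Y a (t - 1) ω)
        ≤ dot (p t ω) (fun a => ucbIndex A Y a (t - 1) ω))
    -- given the past, the arm A_t is drawn according to p_t
    (harm : ∀ t, 1 ≤ t → ∀ a : Fin K,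
      (P[({ω | A t ω = a}).indicator (fun _ => (1 : ℝ)) | hist A Y (t - 1)])
        =ᵐ[P] fun ω => p t ω a)
    -- given the past and A_t, the reward Y_t is drawn according to ν_{A_t}
    (hreward : ∀ t, 1 ≤ t → ∀ s : Set ℝ, MeasurableSet s →
      (P[({ω | Y t ω ∈ s}).indicator (fun _ => (1 : ℝ)) |
          hist A Y (t - 1) ⊔ MeasurableSpace.comap (A t) inferInstance])
        =ᵐ[P] fun ω => ((ν (A t ω)) s).toReal)
    -- `ℓ = min_{p ∈ 𝒫} min_a p_a`, assumed positive
    (ℓ : ℝ) (hℓ : IsLeast {x | ∃ q ∈ Pset, ∃ a : Fin K, q a = x} ℓ) (hℓpos : 0 < ℓ)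
    (T : ℕ) (hT : 1 ≤ T) :
    T * M - ∫ ω, (∑ t ∈ Finset.Icc 1 T, dot (p t ω) μ) ∂P
      ≤ 24 * K / Δ * Real.log (1 + 32 / (Δ ^ 2 * ℓ) * Real.log (16 / (Δ ^ 2 * ℓ)))
        + (7 * K + 3) / min Δ (ℓ ^ 2) := by
  -- rounds are indexed by `n = t - 1`, so that the decision uses the first `n` observations
  have hsub : ∀ q ∈ ExtP, q ∈ Pset := fun q hq => hPset ▸ subset_convexHull ℝ _ hq
  have hΔ0 : 0 < Δ := by
    obtain ⟨_, _, _, h⟩ := hΔ.1; exact h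
  have hle : ∀ q ∈ ExtP, ∀ a, ℓ ≤ q a := fun q hq a => hℓ.2 ⟨q, hsub q hq, a, rfl⟩
  have E : IsRun P ν μ ℓ p A Y :=
    { prob := hνprob, supp := hνsupp, mean := hμ, measA := hA, measY := hY, measp := hpmeas
      arm := harm, reward := hreward, pos := hℓpos
      le_p := fun t ht ω a => hle _ (hUCB t ht ω).1 a
      sum_p := fun t ht ω => (hExtProb _ (hUCB t ht ω).1).2 }
  -- the maximum of a linear form over the convex hull is attained on the generating set
  obtain ⟨q, hqE, hqM⟩ : ∃ q ∈ ExtP, M ≤ dot q μ := by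
    obtain ⟨x, hx, hxM⟩ := hM.1
    rw [hPset] at hx
    have hconv : ConvexOn ℝ (convexHull ℝ (ExtP : Set (Fin K → ℝ))) fun v => dot v μ := by
      refine ⟨convex_convexHull ℝ _, fun v _ w _ s r _ _ _ => le_of_eq ?_⟩
      simp [dot, add_mul, sum_add_distrib, mul_sum, mul_assoc]
    obtain ⟨q, hq, h⟩ := hconv.exists_ge_of_mem_convexHull (subset_convexHull ℝ _) hx
    exact ⟨q, hq, hxM ▸ h⟩
  have hdot : ∀ v ∈ ExtP, dot v μ ∈ Set.Icc (0 : ℝ) 1 := by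
    intro v hv
    obtain ⟨h0, h1⟩ := hExtProb v hv
    refine ⟨sum_nonneg fun a _ => mul_nonneg (h0 a) (E.μ_mem a).1, ?_⟩
    calc dot v μ ≤ ∑ a, v a := sum_le_sum fun a _ => mul_le_of_le_one_right (h0 a) (E.μ_mem a).2
      _ = 1 := h1
  have hgap0 : ∀ v ∈ ExtP, 0 ≤ M - dot v μ := fun v hv =>
    sub_nonneg.2 (hM.2 ⟨v, hsub v hv, rfl⟩)
  have hgap1 : ∀ v ∈ ExtP, M - dot v μ ≤ 1 := fun v hv => by
    linarith [(hdot v hv).1, (hdot q hqE).2]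
  have hgap : ∀ v ∈ ExtP, M - dot v μ ≤ 0 ∨ Δ ≤ M - dot v μ := fun v hv => by
    rcases le_or_gt (M - dot v μ) 0 with h | h
    · exact Or.inl h
    · exact Or.inr (hΔ.2 ⟨v, hv, rfl, h⟩)
  have hΔ1 : Δ ≤ 1 := by
    obtain ⟨v, hv, h, _⟩ := hΔ.1
    exact h ▸ hgap1 v hv
  have hℓ1 : ℓ ≤ 1 := by
    obtain ⟨h0, h1⟩ := hExtProb q hqE
    refine (hle q hqE ⟨0, hK⟩).trans ?_
    rw [← h1]
    exact single_le_sum (f := q) (fun b _ => h0 b) (mem_univ _)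
  -- the length `n0` of the exploration phase
  set x := 16 / (Δ ^ 2 * ℓ) with hx
  set n0 := 32 / (Δ ^ 2 * ℓ) * Real.log x with hn0
  set L := Real.log (1 + n0) with hL
  have hΔℓ : Δ ^ 2 * ℓ ≤ ℓ := mul_le_of_le_one_left hℓpos.le (pow_le_one₀ hΔ0.le hΔ1)
  have hx16 : 16 ≤ x := by
    rw [hx, le_div_iff₀ (by positivity)]
    linarith
  have hlogx : 2.5 ≤ Real.log x :=
    log_sixteen.trans (Real.log_le_log (by norm_num) hx16)
  have hn0ℓ : 80 / ℓ ≤ n0 := by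
    calc 80 / ℓ = 32 / ℓ * 2.5 := by ring
      _ ≤ 32 / (Δ ^ 2 * ℓ) * Real.log x := by gcongr
  have hn080 : 80 ≤ n0 := by
    refine le_trans ?_ hn0ℓ
    rw [le_div_iff₀ hℓpos]; linarith
  have hn0x : n0 = 2 * x * Real.log x := by rw [hn0, hx]; ring
  have hL83 : 8 / 3 ≤ L :=
    eight_thirds_le_log.trans (Real.log_le_log (by norm_num) (by linarith))
  set m := ⌊n0⌋₊ with hm
  have hmn0 : (m : ℝ) ≤ n0 := Nat.floor_le (by linarith)
  have hm1 : Real.log ((m + 1 : ℕ) : ℝ) ≤ L := by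
    refine Real.log_le_log (by positivity) ?_
    push_cast; linarith
  have hmL : Real.log m ≤ L := by
    have h1 : 1 ≤ m := Nat.le_floor (by push_cast; linarith)
    exact (Real.log_le_log (by exact_mod_cast h1) (by push_cast; linarith)).trans hm1
  have hlate : ∀ n : ℕ, ¬ n ≤ m → n0 < n := fun n hn => Nat.lt_of_floor_lt (not_le.1 hn)
  -- the regret is the sum over rounds of the expected gaps
  have hdot_int : ∀ n : ℕ, Integrable (fun ω => dot (p (n + 1) ω) μ) P := by
    intro n
    have hpm : Measurable (p (n + 1)) := (E.measp (n + 1) (by omega)).mono (E.hist_le' _) le_rfl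
    refine Integrable.of_mem_Icc 0 1 ?_
      (Filter.Eventually.of_forall fun ω => hdot _ (hUCB (n + 1) (by omega) ω).1)
    exact (Finset.measurable_sum _ fun a _ =>
      ((measurable_pi_apply a).comp hpm).mul_const _).aemeasurable
  have hreg : T * M - ∫ ω, (∑ t ∈ Finset.Icc 1 T, dot (p t ω) μ) ∂P
      = ∑ n ∈ range T, ∫ ω, (M - dot (p (n + 1) ω) μ) ∂P := by
    have h1 : ∀ ω, ∑ t ∈ Finset.Icc 1 T, dot (p t ω) μ = ∑ n ∈ range T, dot (p (n + 1) ω) μ :=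
      fun ω => by
        rw [range_eq_Ico, sum_Ico_add' (fun t => dot (p t ω) μ) 0 T 1]
        rfl
    simp_rw [h1]
    rw [integral_finsetSum _ fun n _ => hdot_int n]
    simp_rw [integral_sub (integrable_const M) (hdot_int _)]
    rw [sum_sub_distrib]
    simp
  rw [hreg]
  set I : Fin K → ℕ → ℝ := fun a n => ∫ ω, (width L Δ (pulls A a n ω)
        + 2 / Δ * (dev A Y μ a n ω / pulls A a n ω) ^ 2) * p (n + 1) ω a ∂P with hI
  have hI0 : ∀ a n, 0 ≤ I a n := fun a n => integral_nonneg fun ω =>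
    mul_nonneg (add_nonneg (width_nonneg _ _ _) (by positivity)) (E.p_nonneg (by omega) ω a)
  have hexplore : ∀ a, ∑ n ∈ range T, (if n ≤ m then I a n else 0) ≤ 24 * L / Δ := by
    intro a
    rw [← sum_filter]
    calc ∑ n ∈ range T with n ≤ m, I a n ≤ ∑ n ∈ range (m + 1), I a n := by
          refine sum_le_sum_of_subset_of_nonneg (fun n hn => ?_) fun n _ _ => hI0 a n
          simp only [mem_filter, mem_range] at hn ⊢
          omega
      _ ≤ _ := (E.explore_cost a (by linarith) hΔ0).2 (m + 1)
      _ ≤ _ := explore_numeric hL83 hm1 hΔ0 hΔ1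
  calc ∑ n ∈ range T, ∫ ω, (M - dot (p (n + 1) ω) μ) ∂P
      ≤ ∑ n ∈ range T, ((if n = 0 then 1 else 0) + ∑ a, P.real (devEvent A Y μ a n)
        + ∑ a, (if n ≤ m then I a n else 0)
        + ∑ a : Fin K, if n ≤ m then 0 else Real.exp (-(ℓ * n / 8))) :=
        sum_le_sum fun n _ => E.integral_gap_le hΔ0 m (by linarith) hmL
          (fun k hk => log_lt_of_threshold x k (by linarith)
            (by exact_mod_cast (Nat.zero_le m).trans_lt hk)
            (hn0x ▸ hlate k (not_le.2 hk)))
          (hExtProb q hqE).1 hqM n (fun ω => (hUCB (n + 1) (by omega) ω).2 q hqE)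
          (fun ω => hgap _ (hUCB (n + 1) (by omega) ω).1)
          (fun ω => hgap0 _ (hUCB (n + 1) (by omega) ω).1)
          (fun ω => hgap1 _ (hUCB (n + 1) (by omega) ω).1)
    _ = (∑ n ∈ range T, if n = 0 then 1 else 0)
        + ∑ a, ∑ n ∈ range T, P.real (devEvent A Y μ a n)
        + ∑ a, ∑ n ∈ range T, (if n ≤ m then I a n else 0)
        + ∑ a : Fin K, ∑ n ∈ range T, (if n ≤ m then 0 else Real.exp (-(ℓ * n / 8))) := by
        rw [sum_add_distrib, sum_add_distrib, sum_add_distrib]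
        congr 1
        · congr 1
          · congr 1
            exact sum_comm
          · exact sum_comm
        · exact sum_comm
    _ ≤ 1 + ∑ _a : Fin K, 4 + ∑ _a : Fin K, 24 * L / Δ + ∑ _a : Fin K, 3 / ℓ ^ 2 := by
        refine add_le_add (add_le_add (add_le_add ?_ ?_) ?_) ?_
        · rw [sum_ite_eq' (range T) 0 fun _ => (1 : ℝ)]
          split_ifs <;> norm_num
        · exact sum_le_sum fun a _ => E.sum_devEvent_le a T
        · exact sum_le_sum fun a _ => hexplore a
        · exact sum_le_sum fun a _ => sum_exp_tail_le hℓpos hℓ1 T _ fun n hn =>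
            hn0ℓ.trans (hlate n hn).le
    _ = 24 * K / Δ * L + (1 + 4 * K + 3 * K / ℓ ^ 2) := by
        simp only [sum_const, card_univ, Fintype.card_fin, nsmul_eq_mul]
        ring
    _ ≤ 24 * K / Δ * L + (7 * K + 3) / min Δ (ℓ ^ 2) := by
        have hℓ2 : ℓ ^ 2 ≤ 1 := pow_le_one₀ hℓpos.le hℓ1
        have h1 : 1 + 4 * (K : ℝ) + 3 * K / ℓ ^ 2 ≤ (7 * K + 3) / ℓ ^ 2 := by
          have : (1 + 4 * (K : ℝ)) ≤ (1 + 4 * K) / ℓ ^ 2 := by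
            rw [le_div_iff₀ (by positivity)]
            exact mul_le_of_le_one_right (by positivity) hℓ2
          calc _ ≤ (1 + 4 * (K : ℝ)) / ℓ ^ 2 + 3 * K / ℓ ^ 2 := by linarith
            _ = (1 + 7 * K) / ℓ ^ 2 := by ring
            _ ≤ _ := div_le_div_of_nonneg_right (by linarith) (by positivity)
        have h2 : (7 * (K : ℝ) + 3) / ℓ ^ 2 ≤ (7 * K + 3) / min Δ (ℓ ^ 2) :=
          div_le_div_of_nonneg_left (by positivity) (lt_min hΔ0 (by positivity))
            (min_le_right _ _)
        linarith

end DivBanditUCB
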